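/- Let D be a non-square integer and k ≥ 1. Fix ε = (ε₁,…,ε_k) with each ε_i ∈ {1,-1}. Then #{n ≤ x : n squarefree with exactly k prime factors p₁ < … < p_k, and (D/p_i) = ε_i for each i} ~ (1/2^k)·π_k(x) as x → ∞, where π_k(x) counts squarefree n ≤ x with k prime factors. -/

import Mathlib

open Filter Asymptotics
open scoped Classical

namespace WI

open MeasureTheory Topology

/-- Fejer kernel, as a real integral. -/
noncomputable def ker (u : ℝ) : ℝ := ∫ t in (-1:ℝ)..1, (1 - |t|) * Real.cos (t * u)

lemma ker_cont : Continuous ker := by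
  unfold ker
  apply intervalIntegral.continuous_parametric_intervalIntegral_of_continuous'
  fun_prop

lemma ker_eq_half (u : ℝ) : ker u = 2 * ∫ t in (0:ℝ)..1, (1 - t) * Real.cos (t * u) := by
  unfold ker
  rw [← intervalIntegral.integral_add_adjacent_intervals (b := 0)]
  · have h1 : ∫ t in (-1:ℝ)..0, (1 - |t|) * Real.cos (t * u)
        = ∫ t in (0:ℝ)..1, (1 - t) * Real.cos (t * u) := by
      have := intervalIntegral.integral_comp_neg (a := (0:ℝ)) (b := 1)
        (fun t => (1 - |t|) * Real.cos (t * u))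
      simp only [neg_zero] at this
      rw [← this]
      apply intervalIntegral.integral_congr
      intro t ht
      rw [Set.uIcc_of_le (by norm_num)] at ht
      simp [abs_of_nonneg ht.1]
    have h2 : ∫ t in (0:ℝ)..1, (1 - |t|) * Real.cos (t * u)
        = ∫ t in (0:ℝ)..1, (1 - t) * Real.cos (t * u) := by
      apply intervalIntegral.integral_congr
      intro t ht
      rw [Set.uIcc_of_le (by norm_num)] at ht
      simp [abs_of_nonneg ht.1]
    rw [h1, h2]; ring
  · exact (by fun_prop : Continuous fun t : ℝ => (1 - |t|) * Real.cos (t * u)).intervalIntegrable _ _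
  · exact (by fun_prop : Continuous fun t : ℝ => (1 - |t|) * Real.cos (t * u)).intervalIntegrable _ _

lemma ker_eq {u : ℝ} (hu : u ≠ 0) : ker u = 2 * (1 - Real.cos u) / u ^ 2 := by
  rw [ker_eq_half]
  have : ∫ t in (0:ℝ)..1, (1 - t) * Real.cos (t * u) =
      ((1 - 1) * Real.sin (1 * u) / u - Real.cos (1 * u) / u ^ 2)
      - ((1 - 0) * Real.sin (0 * u) / u - Real.cos (0 * u) / u ^ 2) := by
    apply intervalIntegral.integral_eq_sub_of_hasDerivAt
      (f := fun t => (1 - t) * Real.sin (t * u) / u - Real.cos (t * u) / u ^ 2)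
    · intro t _
      have hs : HasDerivAt (fun t : ℝ => Real.sin (t * u)) (Real.cos (t * u) * u) t := by
        simpa using ((hasDerivAt_id t).mul_const u).sin
      have hc : HasDerivAt (fun t : ℝ => Real.cos (t * u)) (-Real.sin (t * u) * u) t := by
        simpa using ((hasDerivAt_id t).mul_const u).cos
      have h1 : HasDerivAt (fun t : ℝ => 1 - t) (-1) t := by
        simpa using (hasDerivAt_id t).const_sub 1
      have := ((h1.mul hs).div_const u).sub (hc.div_const (u^2))
      convert! this using 1
      field_simp
      ring
    · exact (by fun_prop : Continuous fun t : ℝ => (1 - t) * Real.cos (t * u)).intervalIntegrable _ _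
  rw [this]
  simp
  field_simp
  ring

lemma ker_zero : ker 0 = 1 := by
  rw [ker_eq_half]
  simp only [mul_zero, Real.cos_zero, mul_one]
  rw [intervalIntegral.integral_sub (by simp) (by simp)]
  simp
  norm_num

lemma ker_nonneg (u : ℝ) : 0 ≤ ker u := by
  by_cases hu : u = 0
  · rw [hu, ker_zero]; norm_num
  · rw [ker_eq hu]
    have := Real.cos_le_one u
    apply div_nonneg
    · linarith
    · positivity

lemma ker_le (u : ℝ) : ker u ≤ 5 * (1 + u ^ 2)⁻¹ := by
  by_cases hu : u = 0
  · rw [hu, ker_zero]; norm_num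
  · rw [ker_eq hu, ← div_eq_mul_inv, div_le_div_iff₀ (by positivity) (by positivity)]
    have h1 := Real.neg_one_le_cos u
    have h2 := Real.one_sub_sq_div_two_le_cos (x := u)
    nlinarith [sq_nonneg u]

lemma ker_int : Integrable ker := by
  refine (integrable_inv_one_add_sq.const_mul 5).mono' ker_cont.aestronglyMeasurable ?_
  refine Eventually.of_forall fun u => ?_
  rw [Real.norm_of_nonneg (ker_nonneg u)]
  exact ker_le u

lemma ker_pos : 0 < ∫ u, ker u := by
  rw [integral_pos_iff_support_of_nonneg ker_nonneg ker_int]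
  refine (ker_cont.isOpen_support).measure_pos volume ?_
  exact ⟨0, by simp [ker_zero]⟩

lemma ker_complex (u : ℝ) :
    (ker u : ℂ) = ∫ t in Set.Ioc (-1:ℝ) 1, ((1 - |t| : ℝ) : ℂ) * Complex.exp (Complex.I * t * u) := by
  rw [← intervalIntegral.integral_of_le (by norm_num)]
  have h1 : ∀ t : ℝ, ((1 - |t| : ℝ) : ℂ) * Complex.exp (Complex.I * t * u)
      = (((1 - |t|) * Real.cos (t * u) : ℝ) : ℂ) + Complex.I * (((1 - |t|) * Real.sin (t * u) : ℝ) : ℂ) := by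
    intro t
    rw [show Complex.I * t * u = ((t * u : ℝ) : ℂ) * Complex.I by push_cast; ring, Complex.exp_mul_I]
    push_cast
    ring
  simp_rw [h1]
  rw [intervalIntegral.integral_add, intervalIntegral.integral_const_mul,
    intervalIntegral.integral_ofReal, intervalIntegral.integral_ofReal]
  · have : ∫ t in (-1:ℝ)..1, (1 - |t|) * Real.sin (t * u) = 0 := by
      have := intervalIntegral.integral_comp_neg (a := (-1:ℝ)) (b := 1)
        (fun t => (1 - |t|) * Real.sin (t * u))
      simp only [abs_neg, neg_mul, Real.sin_neg, mul_neg, intervalIntegral.integral_neg, neg_neg] at this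
      linarith
    rw [this]
    simp [ker]
  · apply Continuous.intervalIntegrable
    fun_prop
  · apply Continuous.intervalIntegrable
    fun_prop

lemma fourier_step (b : ℝ → ℝ) (hb : Measurable b) (B : ℝ) (hB : ∀ v, |b v| ≤ B) (G : ℂ → ℂ)
    (hG : ∀ s : ℂ, 0 < s.re → ∫ v in Set.Ioi (0:ℝ), (b v : ℂ) * Complex.exp (-s * v) = G s)
    (l y : ℝ) (δ : ℝ) (hδ : 0 < δ) :
    ∫ v in Set.Ioi (0:ℝ), (b v : ℂ) * Complex.exp (-δ * v) * (ker (l * (y - v)) : ℂ)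
     = ∫ t in Set.Ioc (-1:ℝ) 1, ((1 - |t| : ℝ) : ℂ) * Complex.exp (Complex.I * t * (l * y)) *
        G (δ + Complex.I * l * t) := by
  simp_rw [ker_complex]
  simp_rw [← integral_const_mul]
  rw [integral_integral_swap]
  · apply integral_congr_ae
    refine Eventually.of_forall fun t => ?_
    simp only
    rw [← hG _ (by simp [hδ]), ← integral_const_mul]
    apply integral_congr_ae
    refine Eventually.of_forall fun v => ?_
    simp only
    have : Complex.exp (Complex.I * t * ((l * (y - v) : ℝ) : ℂ)) * Complex.exp (-δ * v)
       = Complex.exp (Complex.I * t * (l * y)) * Complex.exp (-(δ + Complex.I * l * t) * v) := by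
      rw [← Complex.exp_add, ← Complex.exp_add]
      congr 1
      push_cast
      ring
    linear_combination (b v : ℂ) * ((1 - |t| : ℝ) : ℂ) * this
  · have h1 : Integrable (fun v : ℝ => B * Real.exp (-δ * v)) (volume.restrict (Set.Ioi 0)) :=
      (integrableOn_exp_mul_Ioi (by linarith) 0).const_mul B
    have h2 : Integrable (fun t : ℝ => (1:ℝ)) (volume.restrict (Set.Ioc (-1:ℝ) 1)) := by
      simp
    refine (h1.mul_prod h2).mono' ?_ ?_
    · apply Measurable.aestronglyMeasurable
      apply Measurable.mul
      · fun_prop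
      · fun_prop
    · have : ∀ᵐ z : ℝ × ℝ ∂((volume.restrict (Set.Ioi 0)).prod (volume.restrict (Set.Ioc (-1:ℝ) 1))),
          z.2 ∈ Set.Ioc (-1:ℝ) 1 := by
        rw [Measure.prod_restrict]
        filter_upwards [ae_restrict_mem (measurableSet_Ioi.prod measurableSet_Ioc)] with z hz
        exact hz.2
      filter_upwards [this] with z hz
      simp only [Function.uncurry, norm_mul, Complex.norm_real, Real.norm_eq_abs]
      have e1 : ‖Complex.exp (-(δ:ℂ) * z.1)‖ = Real.exp (-δ * z.1) := by
        rw [Complex.norm_exp]; simp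
      have e2 : ‖Complex.exp (Complex.I * z.2 * ((l * (y - z.1) : ℝ) : ℂ))‖ = 1 := by
        rw [show Complex.I * z.2 * ((l * (y - z.1) : ℝ) : ℂ) = ((z.2 * (l * (y - z.1)) : ℝ) : ℂ) * Complex.I by
          push_cast; ring]
        exact Complex.norm_exp_ofReal_mul_I _
      rw [e1, e2]
      have e3 : |(1 - |z.2|)| ≤ 1 := by
        have : |z.2| ≤ 1 := abs_le.2 ⟨hz.1.le, hz.2⟩
        rw [abs_le]; constructor <;> linarith [abs_nonneg z.2]
      have := hB z.1
      have hB0 : 0 ≤ B := (abs_nonneg _).trans this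
      rw [mul_one]
      gcongr

end WI

namespace WI

open MeasureTheory Topology

lemma ker_comp_int {l : ℝ} (hl : 0 < l) (y : ℝ) : Integrable (fun v => ker (l * (y - v))) := by
  have h1 : Integrable (fun v => ker (l * v)) := ker_int.comp_mul_left' hl.ne'
  exact h1.comp_sub_left y

lemma limit_step (b : ℝ → ℝ) (hb : Measurable b) (B : ℝ) (hB : ∀ v, |b v| ≤ B) (G : ℂ → ℂ)
    (hGc : ContinuousOn G {s | 0 ≤ s.re})
    (hG : ∀ s : ℂ, 0 < s.re → ∫ v in Set.Ioi (0:ℝ), (b v : ℂ) * Complex.exp (-s * v) = G s)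
    (l y : ℝ) (hl : 0 < l) :
    ∫ v in Set.Ioi (0:ℝ), (b v : ℂ) * (ker (l * (y - v)) : ℂ)
     = ∫ t in Set.Ioc (-1:ℝ) 1, ((1 - |t| : ℝ) : ℂ) * Complex.exp (Complex.I * t * (l * y)) *
        G (Complex.I * l * t) := by
  have hB0 : 0 ≤ B := (abs_nonneg _).trans (hB 0)
  have L1 : Tendsto (fun δ : ℝ => ∫ v in Set.Ioi (0:ℝ), (b v : ℂ) * Complex.exp (-δ * v) * (ker (l * (y - v)) : ℂ))
      (𝓝[>] 0) (𝓝 (∫ v in Set.Ioi (0:ℝ), (b v : ℂ) * (ker (l * (y - v)) : ℂ))) := by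
    apply tendsto_integral_filter_of_dominated_convergence (fun v => B * ker (l * (y - v)))
    · refine Eventually.of_forall fun δ => ?_
      apply Measurable.aestronglyMeasurable
      have := ker_cont.measurable
      fun_prop
    · filter_upwards [self_mem_nhdsWithin] with δ hδ
      filter_upwards [ae_restrict_mem measurableSet_Ioi] with v hv
      simp only [norm_mul, Complex.norm_real, Real.norm_eq_abs, abs_of_nonneg (ker_nonneg _)]
      have e1 : ‖Complex.exp (-(δ:ℂ) * v)‖ ≤ 1 := by
        rw [Complex.norm_exp]; simp
        exact mul_nonneg (le_of_lt hδ) (le_of_lt hv)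
      have := ker_nonneg (l * (y - v))
      calc _ ≤ B * 1 * ker (l * (y - v)) := by
            gcongr
            exact hB v
        _ = _ := by ring
    · exact ((ker_comp_int hl y).const_mul B).restrict
    · refine Eventually.of_forall fun v => ?_
      have : Tendsto (fun δ : ℝ => (b v : ℂ) * Complex.exp (-δ * v) * (ker (l * (y - v)) : ℂ)) (𝓝 0)
          (𝓝 ((b v : ℂ) * Complex.exp (-(0:ℝ) * v) * (ker (l * (y - v)) : ℂ))) := by
        apply Continuous.tendsto (f := fun δ : ℝ => (b v : ℂ) * Complex.exp (-δ * v) * (ker (l * (y - v)) : ℂ))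
        fun_prop
      simpa using this.mono_left nhdsWithin_le_nhds
  have hcomp : IsCompact (Set.Icc (0:ℝ) 1 ×ℂ Set.Icc (-l) l) := isCompact_Icc.reProdIm isCompact_Icc
  obtain ⟨M, hM⟩ := hcomp.exists_bound_of_continuousOn (hGc.mono (by
    intro s hs
    exact hs.1.1))
  have memIt : ∀ t ∈ Set.Ioc (-1:ℝ) 1, ∀ δ ∈ Set.Icc (0:ℝ) 1, (δ + Complex.I * l * t : ℂ) ∈ Set.Icc (0:ℝ) 1 ×ℂ Set.Icc (-l) l := by
    intro t ht δ hδ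
    rw [Complex.mem_reProdIm]
    simp only [Complex.add_re, Complex.ofReal_re, Complex.mul_re, Complex.I_re, Complex.I_im, Complex.ofReal_im,
      Complex.add_im, Complex.mul_im]
    simp only [Set.mem_Icc]
    refine ⟨⟨by simpa using hδ.1, by simpa using hδ.2⟩, ?_, ?_⟩
    · nlinarith [ht.1]
    · nlinarith [ht.2]
  have L2 : Tendsto (fun δ : ℝ => ∫ t in Set.Ioc (-1:ℝ) 1, ((1 - |t| : ℝ) : ℂ) * Complex.exp (Complex.I * t * (l * y)) *
        G (δ + Complex.I * l * t)) (𝓝[>] 0) (𝓝 (∫ t in Set.Ioc (-1:ℝ) 1, ((1 - |t| : ℝ) : ℂ) * Complex.exp (Complex.I * t * (l * y)) *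
        G (Complex.I * l * t))) := by
    have hev : ∀ᶠ δ : ℝ in 𝓝[>] 0, δ ∈ Set.Ioc (0:ℝ) 1 := Ioc_mem_nhdsGT (by norm_num)
    apply tendsto_integral_filter_of_dominated_convergence (fun t => M)
    · filter_upwards [hev] with δ hδ
      apply ContinuousOn.aestronglyMeasurable _ measurableSet_Ioc
      apply ContinuousOn.mul (by fun_prop)
      apply hGc.comp (by fun_prop)
      intro t ht
      simp [hδ.1.le]
    · filter_upwards [hev] with δ hδ
      filter_upwards [ae_restrict_mem measurableSet_Ioc] with t ht
      have e1 : ‖((1 - |t| : ℝ) : ℂ)‖ ≤ 1 := by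
        rw [Complex.norm_real, Real.norm_eq_abs]
        have : |t| ≤ 1 := abs_le.2 ⟨ht.1.le, ht.2⟩
        rw [abs_le]; constructor <;> linarith [abs_nonneg t]
      have e2 : ‖Complex.exp (Complex.I * t * (l * y))‖ = 1 := by
        rw [show Complex.I * t * (l * y) = ((t * (l * y) : ℝ) : ℂ) * Complex.I by
          push_cast; ring]
        exact Complex.norm_exp_ofReal_mul_I _
      rw [norm_mul, norm_mul, e2, mul_one]
      have := hM _ (memIt t ht δ ⟨hδ.1.le, hδ.2⟩)
      calc _ ≤ 1 * M := by gcongr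
        _ = M := one_mul M
    · simp
    · filter_upwards [ae_restrict_mem measurableSet_Ioc] with t ht
      apply Tendsto.const_mul
      have hc : ContinuousWithinAt G {s | 0 ≤ s.re} (Complex.I * l * t) := hGc _ (by simp)
      refine hc.tendsto.comp ?_
      rw [tendsto_nhdsWithin_iff]
      constructor
      · have : Tendsto (fun δ : ℝ => (δ + Complex.I * l * t : ℂ)) (𝓝 0) (𝓝 ((0:ℝ) + Complex.I * l * t : ℂ)) := by
          apply Continuous.tendsto (f := fun δ : ℝ => (δ + Complex.I * l * t : ℂ))
          fun_prop
        simpa using this.mono_left nhdsWithin_le_nhds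
      · filter_upwards [hev] with δ hδ
        simp [hδ.1.le]
  refine tendsto_nhds_unique L1 (L2.congr' ?_)
  filter_upwards [self_mem_nhdsWithin] with δ hδ
  exact (fourier_step b hb B hB G hG l y δ hδ).symm

lemma rl_step (b : ℝ → ℝ) (hb : Measurable b) (B : ℝ) (hB : ∀ v, |b v| ≤ B) (G : ℂ → ℂ)
    (hGc : ContinuousOn G {s | 0 ≤ s.re})
    (hG : ∀ s : ℂ, 0 < s.re → ∫ v in Set.Ioi (0:ℝ), (b v : ℂ) * Complex.exp (-s * v) = G s)
    (l : ℝ) (hl : 0 < l) :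
    Tendsto (fun y : ℝ => ∫ v in Set.Ioi (0:ℝ), b v * ker (l * (y - v))) atTop (𝓝 0) := by
  have key : Tendsto (fun y : ℝ => ∫ v in Set.Ioi (0:ℝ), (b v : ℂ) * (ker (l * (y - v)) : ℂ)) atTop (𝓝 0) := by
    simp_rw [limit_step b hb B hB G hGc hG l _ hl]
    have := Real.tendsto_integral_exp_smul_cocompact
      (Set.indicator (Set.Ioc (-1:ℝ) 1) fun t => ((1 - |t| : ℝ) : ℂ) * G (Complex.I * l * t))
    have h2 : Tendsto (fun y : ℝ => - (l * y) / (2 * Real.pi)) atTop (cocompact ℝ) := by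
      rw [cocompact_eq_atBot_atTop]
      refine Tendsto.mono_right ?_ le_sup_left
      have : Tendsto (fun y : ℝ => (l / (2 * Real.pi)) * y) atTop atTop :=
        tendsto_id.const_mul_atTop (by positivity)
      refine (tendsto_neg_atTop_atBot.comp this).congr fun y => ?_
      simp; ring
    refine (this.comp h2).congr fun y => ?_
    simp only [Function.comp]
    rw [← integral_indicator measurableSet_Ioc]
    congr 1
    ext t
    by_cases ht : t ∈ Set.Ioc (-1:ℝ) 1
    · rw [Set.indicator_of_mem ht, Set.indicator_of_mem ht, Circle.smul_def, Real.fourierChar_apply, smul_eq_mul]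
      have : Complex.exp ((2 * Real.pi * -(t * (-(l * y) / (2 * Real.pi))) : ℝ) * Complex.I) = Complex.exp (Complex.I * t * (l * y)) := by
        congr 1
        have := Real.pi_ne_zero
        rw [show 2 * Real.pi * -(t * (-(l * y) / (2 * Real.pi))) = t * (l * y) by field_simp]
        push_cast; ring
      rw [this]
      ring
    · rw [Set.indicator_of_notMem ht, Set.indicator_of_notMem ht]; simp
  have k2 := (Complex.continuous_re.tendsto 0).comp key
  simp only [Complex.zero_re] at k2
  refine k2.congr fun y => ?_
  simp only [Function.comp]
  have : ∫ v in Set.Ioi (0:ℝ), (b v : ℂ) * (ker (l * (y - v)) : ℂ)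
      = ((∫ v in Set.Ioi (0:ℝ), b v * ker (l * (y - v)) : ℝ) : ℂ) := by
    rw [← integral_complex_ofReal]
    simp
  rw [this, Complex.ofReal_re]

end WI

namespace WI

open MeasureTheory Topology

lemma change_var (g : ℝ → ℝ) (l y : ℝ) (hl : 0 < l) :
    l * ∫ v in Set.Ioi (0:ℝ), g v * ker (l * (y - v))
      = ∫ u, (Set.Ioi (0:ℝ)).indicator g (y - u / l) * ker u := by
  rw [← integral_indicator measurableSet_Ioi]
  have e : ∀ v, (Set.Ioi (0:ℝ)).indicator (fun v => g v * ker (l * (y - v))) v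
      = (fun u => (Set.Ioi (0:ℝ)).indicator g (y - u / l) * ker u) (l * (y - v)) := by
    intro v
    have : y - l * (y - v) / l = v := by field_simp; ring
    simp only [this]
    by_cases hv : v ∈ Set.Ioi (0:ℝ)
    · simp [Set.indicator_of_mem hv]
    · simp [Set.indicator_of_notMem hv]
  simp_rw [e]
  rw [integral_sub_left_eq_self (fun v => (fun u => (Set.Ioi (0:ℝ)).indicator g (y - u / l) * ker u) (l * v)) volume y]
  rw [Measure.integral_comp_mul_left (fun u => (Set.Ioi (0:ℝ)).indicator g (y - u / l) * ker u) l]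
  rw [abs_of_pos (inv_pos.2 hl), smul_eq_mul, ← mul_assoc, mul_inv_cancel₀ hl.ne', one_mul]

lemma const_lim (l : ℝ) :
    Tendsto (fun y : ℝ => ∫ u, (Set.Ioi (0:ℝ)).indicator (fun _ => (1:ℝ)) (y - u / l) * ker u) atTop
      (𝓝 (∫ u, ker u)) := by
  apply tendsto_integral_filter_of_dominated_convergence ker
  · refine Eventually.of_forall fun y => ?_
    apply Measurable.aestronglyMeasurable
    apply Measurable.mul _ ker_cont.measurable
    exact (measurable_const.indicator measurableSet_Ioi).comp (by fun_prop)
  · refine Eventually.of_forall fun y => Eventually.of_forall fun u => ?_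
    rw [norm_mul, Real.norm_of_nonneg (ker_nonneg u)]
    have : ‖(Set.Ioi (0:ℝ)).indicator (fun _ => (1:ℝ)) (y - u / l)‖ ≤ 1 := by
      refine (norm_indicator_le_norm_self _ _).trans (by simp)
    nlinarith [ker_nonneg u]
  · exact ker_int
  · refine Eventually.of_forall fun u => ?_
    refine tendsto_const_nhds.congr' ?_
    filter_upwards [eventually_gt_atTop (u / l)] with y hy
    rw [Set.indicator_of_mem (by simpa using hy)]
    simp

lemma kerR_lim : Tendsto (fun R : ℝ => ∫ u in Set.Icc (-R) R, ker u) atTop (𝓝 (∫ u, ker u)) := by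
  have := (aecover_Icc (μ := volume) (tendsto_neg_atTop_atBot (G := ℝ)) tendsto_id)
  exact this.integral_tendsto_of_countably_generated ker_int

theorem tauber (a : ℝ → ℝ) (ha : Measurable a) (C c : ℝ) (ha0 : ∀ v, 0 ≤ a v) (haC : ∀ v, a v ≤ C)
    (hmono : ∀ v w, v ≤ w → a v * Real.exp v ≤ a w * Real.exp w)
    (hlim : ∀ l > 0, Tendsto (fun y : ℝ => ∫ v in Set.Ioi (0:ℝ), (a v - c) * ker (l * (y - v))) atTop (𝓝 0)) :
    Tendsto a atTop (𝓝 c) := by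
  set κ := ∫ u, ker u with hκ
  have κpos : 0 < κ := ker_pos
  set at' := (Set.Ioi (0:ℝ)).indicator a with hat
  have hat0 : ∀ v, 0 ≤ at' v := fun v => Set.indicator_nonneg (fun _ _ => ha0 _) _
  have hatC : ∀ v, at' v ≤ C := fun v => Set.indicator_le' (fun _ _ => haC _) (fun _ _ => (ha0 0).trans (haC 0)) _
  have hatm : Measurable at' := ha.indicator measurableSet_Ioi
  have hIntg : ∀ l y : ℝ, Integrable (fun u => at' (y - u / l) * ker u) := by
    intro l y
    refine (ker_int.const_mul C).mono' ?_ ?_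
    · apply Measurable.aestronglyMeasurable
      exact (hatm.comp (by fun_prop)).mul ker_cont.measurable
    · refine Eventually.of_forall fun u => ?_
      rw [norm_mul, Real.norm_of_nonneg (ker_nonneg u), Real.norm_of_nonneg (hat0 _)]
      exact mul_le_mul_of_nonneg_right (hatC _) (ker_nonneg u)
  have hJ : ∀ l > 0, Tendsto (fun y : ℝ => ∫ u, at' (y - u / l) * ker u) atTop (𝓝 (c * κ)) := by
    intro l hl
    have h1 := ((hlim l hl).const_mul l).add ((const_lim l).const_mul c)
    rw [mul_zero, zero_add] at h1
    refine h1.congr fun y => ?_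
    rw [change_var (fun v => a v - c) l y hl, ← integral_const_mul, ← integral_add]
    · congr 1
      ext u
      by_cases hv : y - u / l ∈ Set.Ioi (0:ℝ)
      · simp only [hat, Set.indicator_of_mem hv]; ring
      · simp only [hat, Set.indicator_of_notMem hv]; ring
    · have h2 : Integrable (fun u => at' (y - u / l) * ker u - c * ((Set.Ioi (0:ℝ)).indicator (fun _ => (1:ℝ)) (y - u / l) * ker u)) := by
        apply (hIntg l y).sub
        apply Integrable.const_mul
        apply ker_int.mono'
        · apply Measurable.aestronglyMeasurable
          apply Measurable.mul _ ker_cont.measurable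
          exact (measurable_const.indicator measurableSet_Ioi).comp (by fun_prop)
        · refine Eventually.of_forall fun u => ?_
          rw [norm_mul, Real.norm_of_nonneg (ker_nonneg u)]
          have : ‖(Set.Ioi (0:ℝ)).indicator (fun _ => (1:ℝ)) (y - u / l)‖ ≤ 1 := by
            refine (norm_indicator_le_norm_self _ _).trans (by simp)
          nlinarith [ker_nonneg u]
      refine h2.congr (Eventually.of_forall fun u => ?_)
      by_cases hv : y - u / l ∈ Set.Ioi (0:ℝ)
      · simp only [hat, Set.indicator_of_mem hv]; ring
      · simp only [hat, Set.indicator_of_notMem hv]; ring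
    · apply Integrable.const_mul
      apply ker_int.mono'
      · apply Measurable.aestronglyMeasurable
        apply Measurable.mul _ ker_cont.measurable
        exact (measurable_const.indicator measurableSet_Ioi).comp (by fun_prop)
      · refine Eventually.of_forall fun u => ?_
        rw [norm_mul, Real.norm_of_nonneg (ker_nonneg u)]
        have : ‖(Set.Ioi (0:ℝ)).indicator (fun _ => (1:ℝ)) (y - u / l)‖ ≤ 1 := by
          refine (norm_indicator_le_norm_self _ _).trans (by simp)
        nlinarith [ker_nonneg u]
  have hexp : Tendsto (fun R : ℝ => Real.exp (2 / R)) atTop (𝓝 1) := by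
    have : Tendsto (fun R : ℝ => 2 / R) atTop (𝓝 0) := tendsto_const_nhds.div_atTop tendsto_id
    simpa [Function.comp_def] using (Real.continuous_exp.tendsto 0).comp this
  have hR := kerR_lim
  rw [← hκ] at hR
  rw [tendsto_order]
  constructor
  · intro m hm
    have T1 : Tendsto (fun R : ℝ => (c * κ - C * (κ - ∫ u in Set.Icc (-R) R, ker u)) / (Real.exp (2 / R) * κ)) atTop
        (𝓝 ((c * κ - C * (κ - κ)) / (1 * κ))) := by
      apply Tendsto.div _ (hexp.mul_const κ) (by simpa using κpos.ne')
      exact tendsto_const_nhds.sub ((tendsto_const_nhds.sub hR).const_mul C)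
    rw [show (c * κ - C * (κ - κ)) / (1 * κ) = c by field_simp; ring] at T1
    obtain ⟨R, hRm, hR1⟩ := ((T1.eventually (lt_mem_nhds hm)).and (eventually_ge_atTop 1)).exists
    have hR0 : 0 < R := by linarith
    have T2 : Tendsto (fun y : ℝ => ((∫ u, at' ((y - 1 / R) - u / (R ^ 2)) * ker u) - C * (κ - ∫ u in Set.Icc (-R) R, ker u)) / (Real.exp (2 / R) * κ)) atTop
        (𝓝 ((c * κ - C * (κ - ∫ u in Set.Icc (-R) R, ker u)) / (Real.exp (2 / R) * κ))) := by
      apply Tendsto.div_const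
      apply Tendsto.sub_const
      exact (hJ (R ^ 2) (by positivity)).comp (tendsto_atTop_add_const_right _ _ tendsto_id)
    filter_upwards [T2.eventually (lt_mem_nhds hRm)] with y hy
    refine lt_of_lt_of_le hy ?_
    rw [div_le_iff₀ (by positivity)]
    have hsplit : κ - ∫ u in Set.Icc (-R) R, ker u = ∫ u in (Set.Icc (-R) R)ᶜ, ker u := by
      rw [hκ, ← integral_add_compl measurableSet_Icc ker_int]; ring
    rw [hsplit, sub_le_iff_le_add]
    have : ∫ u, at' ((y - 1 / R) - u / (R ^ 2)) * ker u ≤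
        ∫ u, (a y * Real.exp (2 / R) * ker u + (Set.Icc (-R) R)ᶜ.indicator (fun u => C * ker u) u) := by
      apply integral_mono (hIntg _ _)
      · exact (ker_int.const_mul _).add ((ker_int.const_mul C).indicator measurableSet_Icc.compl)
      · intro u
        simp only
        by_cases hu : u ∈ Set.Icc (-R) R
        · rw [Set.indicator_of_notMem (by simpa using hu), add_zero]
          apply mul_le_mul_of_nonneg_right _ (ker_nonneg u)
          set v := y - 1 / R - u / R ^ 2 with hv
          have hu1 : u / R ^ 2 ≤ 1 / R := by
            rw [div_le_div_iff₀ (by positivity) hR0]; nlinarith [hu.2]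
          have hu2 : -(1 / R) ≤ u / R ^ 2 := by
            rw [← neg_div, div_le_div_iff₀ hR0 (by positivity)]; nlinarith [hu.1]
          have h3 : at' v ≤ a v := Set.indicator_le_self' (fun _ _ => ha0 _) _
          have h4 := hmono v y (by linarith)
          have h5 : a v ≤ a y * Real.exp (y - v) := by
            rw [Real.exp_sub, ← mul_div_assoc, le_div_iff₀ (Real.exp_pos _)]; exact h4
          refine h3.trans (h5.trans ?_)
          have : y - v ≤ 2 / R := by
            rw [hv]
            have : 2 / R = 1 / R + 1 / R := by ring
            linarith
          have h0 := ha0 y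
          gcongr
        · rw [Set.indicator_of_mem (by simpa using hu)]
          have h1 := mul_le_mul_of_nonneg_right (hatC (y - 1 / R - u / R ^ 2)) (ker_nonneg u)
          have h2 : 0 ≤ a y * Real.exp (2 / R) * ker u := mul_nonneg (mul_nonneg (ha0 y) (Real.exp_pos _).le) (ker_nonneg u)
          linarith
    refine this.trans ?_
    rw [integral_add (ker_int.const_mul _) ((ker_int.const_mul C).indicator measurableSet_Icc.compl),
      integral_const_mul, integral_indicator measurableSet_Icc.compl, integral_const_mul, mul_assoc]
  · intro m hm
    have T1 : Tendsto (fun R : ℝ => (c * κ) / (Real.exp (2 / R))⁻¹ / (∫ u in Set.Icc (-R) R, ker u)) atTop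
        (𝓝 ((c * κ) / 1⁻¹ / κ)) := by
      apply Tendsto.div _ hR κpos.ne'
      apply Tendsto.div tendsto_const_nhds (hexp.inv₀ (by norm_num)) (by norm_num)
    rw [show (c * κ) / 1⁻¹ / κ = c by field_simp] at T1
    obtain ⟨R, ⟨hRm, hRk⟩, hR1⟩ := (((T1.eventually (gt_mem_nhds hm)).and (hR.eventually (lt_mem_nhds κpos))).and (eventually_ge_atTop 1)).exists
    have hR0 : 0 < R := by linarith
    have T2 : Tendsto (fun y : ℝ => (∫ u, at' ((y + 1 / R) - u / (R ^ 2)) * ker u) / (Real.exp (2 / R))⁻¹ / (∫ u in Set.Icc (-R) R, ker u)) atTop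
        (𝓝 ((c * κ) / (Real.exp (2 / R))⁻¹ / (∫ u in Set.Icc (-R) R, ker u))) := by
      apply Tendsto.div_const
      apply Tendsto.div_const
      exact (hJ (R ^ 2) (by positivity)).comp (tendsto_atTop_add_const_right _ _ tendsto_id)
    filter_upwards [T2.eventually (gt_mem_nhds hRm), eventually_gt_atTop 0] with y hy hy0
    refine lt_of_le_of_lt ?_ hy
    rw [le_div_iff₀ hRk, le_div_iff₀ (by positivity)]
    have : ∫ u, ((Set.Icc (-R) R).indicator (fun u => a y * (Real.exp (2 / R))⁻¹ * ker u) u) ≤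
      ∫ u, at' ((y + 1 / R) - u / (R ^ 2)) * ker u := by
      apply integral_mono _ (hIntg _ _)
      · intro u
        simp only
        by_cases hu : u ∈ Set.Icc (-R) R
        · rw [Set.indicator_of_mem hu]
          apply mul_le_mul_of_nonneg_right _ (ker_nonneg u)
          set v := y + 1 / R - u / R ^ 2 with hv
          have hu1 : u / R ^ 2 ≤ 1 / R := by
            rw [div_le_div_iff₀ (by positivity) hR0]; nlinarith [hu.2]
          have hu2 : -(1 / R) ≤ u / R ^ 2 := by
            rw [← neg_div, div_le_div_iff₀ hR0 (by positivity)]; nlinarith [hu.1]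
          have hvy : y ≤ v := by linarith
          have h3 : at' v = a v := Set.indicator_of_mem (by simp only [Set.mem_Ioi]; linarith) _
          rw [h3]
          have h4 := hmono y v hvy
          have h5 : a y * (Real.exp (v - y))⁻¹ ≤ a v := by
            rw [← div_eq_mul_inv, div_le_iff₀ (Real.exp_pos _), Real.exp_sub, ← mul_div_assoc, le_div_iff₀ (Real.exp_pos _)]; exact h4
          refine le_trans ?_ h5
          have : v - y ≤ 2 / R := by
            rw [hv]
            have : 2 / R = 1 / R + 1 / R := by ring
            linarith
          have h0 := ha0 y
          gcongr
        · rw [Set.indicator_of_notMem hu]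
          exact mul_nonneg (hat0 _) (ker_nonneg u)
      · exact (ker_int.const_mul _).indicator measurableSet_Icc
    rw [integral_indicator measurableSet_Icc, integral_const_mul] at this
    linarith

end WI

namespace WI

open MeasureTheory Topology

theorem wiener_ikehara (f : ℕ → ℝ) (hf : ∀ n, 0 ≤ f n) (C c : ℝ)
    (hC : ∀ n : ℕ, ∑ k ∈ Finset.Icc 1 n, f k ≤ C * n) (H : ℂ → ℂ)
    (hH : ContinuousOn H {s | 1 ≤ s.re})
    (hE : ∀ s : ℂ, 1 < s.re → LSeries (fun n => (f n : ℂ)) s - c / (s - 1) = H s) :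
    Tendsto (fun n : ℕ => (∑ k ∈ Finset.Icc 1 n, f k) / n) atTop (𝓝 c) := by
  set S : ℝ → ℝ := fun t => ∑ k ∈ Finset.Icc 1 ⌊t⌋₊, f k with hS
  have hSmono : Monotone S := by
    intro x y hxy
    apply Finset.sum_le_sum_of_subset_of_nonneg
    · exact Finset.Icc_subset_Icc_right (Nat.floor_mono hxy)
    · intros; exact hf _
  have hC0 : 0 ≤ C := by
    have := hC 1
    simp at this
    exact (hf 1).trans this
  set a : ℝ → ℝ := fun v => S (Real.exp v) * Real.exp (-v) with hadef
  have ha : Measurable a := by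
    apply Measurable.mul
    · exact hSmono.measurable.comp Real.measurable_exp
    · fun_prop
  have ha0 : ∀ v, 0 ≤ a v := fun v => mul_nonneg (Finset.sum_nonneg fun _ _ => hf _) (Real.exp_pos _).le
  have haC : ∀ v, a v ≤ C := by
    intro v
    have h1 : S (Real.exp v) ≤ C * Real.exp v := (hC _).trans (by
      gcongr
      exact Nat.floor_le (Real.exp_pos _).le)
    calc a v ≤ C * Real.exp v * Real.exp (-v) := by
          simp only [hadef]; gcongr
      _ = C := by rw [mul_assoc, ← Real.exp_add]; simp
  have hmono : ∀ v w, v ≤ w → a v * Real.exp v ≤ a w * Real.exp w := by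
    intro v w hvw
    have : ∀ v, a v * Real.exp v = S (Real.exp v) := by
      intro v
      simp only [hadef]
      rw [mul_assoc, ← Real.exp_add]; simp
    rw [this, this]
    exact hSmono (Real.exp_le_exp.2 hvw)
  have hO : (fun n : ℕ ↦ ∑ k ∈ Finset.Icc 1 n, f k) =O[atTop] fun n ↦ (n : ℝ) ^ (1:ℝ) := by
    refine IsBigO.of_bound C (Eventually.of_forall fun n => ?_)
    rw [Real.norm_of_nonneg (Finset.sum_nonneg fun _ _ => hf _)]
    simpa using hC n
  have hlap : ∀ s : ℂ, 0 < s.re → ∫ v in Set.Ioi (0:ℝ), (a v : ℂ) * Complex.exp (-s * v)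
      = LSeries (fun n => (f n : ℂ)) (s + 1) / (s + 1) := by
    intro s hs
    have hs1 : s + 1 ≠ 0 := by
      intro h
      have := congrArg Complex.re h
      simp at this; linarith
    rw [LSeries_eq_mul_integral_of_nonneg f zero_le_one (s := s + 1) (by simpa using hs) hO hf,
      mul_div_cancel_left₀ _ hs1]
    have him : Real.exp '' (Set.Ioi 0) = Set.Ioi 1 := by
      ext x
      constructor
      · rintro ⟨v, hv, rfl⟩
        exact Real.one_lt_exp_iff.2 hv
      · intro hx
        have hx0 : (0:ℝ) < x := lt_trans one_pos hx
        exact ⟨Real.log x, Real.log_pos hx, Real.exp_log hx0⟩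
    rw [← him, integral_image_eq_integral_abs_deriv_smul measurableSet_Ioi
      (fun x _ => (Real.hasDerivAt_exp x).hasDerivWithinAt) Real.exp_injective.injOn]
    apply integral_congr_ae
    refine Eventually.of_forall fun v => ?_
    simp only [hadef, hS, Complex.real_smul, abs_of_pos (Real.exp_pos v)]
    have e1 : (Real.exp v : ℂ) ^ (-(s + 1 + 1)) = Complex.exp (-(s+1+1) * v) := by
      rw [Complex.cpow_def_of_ne_zero (by exact_mod_cast (Real.exp_pos v).ne'),
        ← Complex.ofReal_log (Real.exp_pos v).le, Real.log_exp, mul_comm]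
    rw [e1]
    push_cast
    have e2 : Complex.exp v * Complex.exp (-(s+1+1)*v) = Complex.exp (-v) * Complex.exp (-s * v) := by
      rw [← Complex.exp_add, ← Complex.exp_add]; congr 1; ring
    linear_combination (-(∑ k ∈ Finset.Icc 1 ⌊Real.exp v⌋₊, (f k : ℂ))) * e2
  have hbint : ∀ s : ℂ, 0 < s.re → ∫ v in Set.Ioi (0:ℝ), ((a v - c : ℝ) : ℂ) * Complex.exp (-s * v)
      = (H (s + 1) - c) / (s + 1) := by
    intro s hs
    have hs0 : s ≠ 0 := by
      rintro rfl; simp at hs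
    have hs1 : s + 1 ≠ 0 := by
      intro h
      have := congrArg Complex.re h
      simp at this; linarith
    have i2 : IntegrableOn (fun v : ℝ => Complex.exp (-s * v)) (Set.Ioi 0) :=
      integrableOn_exp_mul_complex_Ioi (by simpa using hs) 0
    have i1 : IntegrableOn (fun v : ℝ => (a v : ℂ) * Complex.exp (-s * v)) (Set.Ioi 0) := by
      refine Integrable.bdd_mul (c := C) i2 ?_ ?_
      · exact (Complex.measurable_ofReal.comp ha).aestronglyMeasurable
      · refine Eventually.of_forall fun v => ?_
        rw [Complex.norm_real, Real.norm_of_nonneg (ha0 v)]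
        exact haC v
    have : ∀ v : ℝ, ((a v - c : ℝ) : ℂ) * Complex.exp (-s * v) = (a v : ℂ) * Complex.exp (-s * v) - c * Complex.exp (-s * v) := by
      intro v; push_cast; ring
    simp_rw [this]
    rw [integral_sub i1 (i2.const_mul _), hlap s hs, integral_const_mul, integral_exp_mul_complex_Ioi (by simpa using hs)]
    rw [← hE (s + 1) (by simpa using hs)]
    simp
    field_simp
    ring
  have hlim : ∀ l > 0, Tendsto (fun y : ℝ => ∫ v in Set.Ioi (0:ℝ), (a v - c) * ker (l * (y - v))) atTop (𝓝 0) := by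
    intro l hl
    refine rl_step (fun v => a v - c) (ha.sub_const c) (C + |c|) ?_ (fun s => (H (s + 1) - c) / (s + 1)) ?_ hbint l hl
    · intro v
      refine (abs_sub _ _).trans ?_
      rw [abs_of_nonneg (ha0 v)]
      linarith [haC v]
    · apply ContinuousOn.div
      · apply ContinuousOn.sub _ continuousOn_const
        apply hH.comp (by fun_prop)
        intro s hs
        simpa using hs
      · fun_prop
      · intro s hs h
        have := congrArg Complex.re h
        simp at this hs; linarith
  have hfin := tauber a ha C c ha0 haC hmono hlim
  have hlog : Tendsto (fun n : ℕ => Real.log n) atTop atTop := Real.tendsto_log_atTop.comp tendsto_natCast_atTop_atTop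
  refine (hfin.comp hlog).congr' ?_
  filter_upwards [eventually_gt_atTop 0] with n hn
  have hn' : (0:ℝ) < n := by exact_mod_cast hn
  simp only [Function.comp, hadef, hS]
  rw [Real.exp_neg, Real.exp_log hn', Nat.floor_natCast, div_eq_mul_inv]

open ArithmeticFunction ArithmeticFunction.vonMangoldt in
theorem pnt_ap_psi (q : ℕ) [NeZero q] (a : ZMod q) (ha : IsUnit a) :
    Tendsto (fun n : ℕ => (∑ k ∈ Finset.Icc 1 n, residueClass a k) / n) atTop (𝓝 ((q.totient : ℝ)⁻¹)) := by
  apply wiener_ikehara _ (residueClass_nonneg a) (Real.log 4 + 4) _ _ (LFunctionResidueClassAux a)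
    (continuousOn_LFunctionResidueClassAux a)
  · intro s hs
    rw [eqOn_LFunctionResidueClassAux ha hs]
    push_cast
    rfl
  · intro n
    refine le_trans ?_ (Chebyshev.psi_le_const_mul_self (Nat.cast_nonneg n))
    rw [Chebyshev.psi, Nat.floor_natCast]
    exact Finset.sum_le_sum fun k _ => residueClass_le a k

end WI

namespace WI

open MeasureTheory Topology

/-- number of `k ≤ t` with `P k` -/
noncomputable def cnt (P : ℕ → Prop) (t : ℝ) : ℝ := (((Finset.Icc 1 ⌊t⌋₊).filter P).card : ℝ)

noncomputable def tht (P : ℕ → Prop) (t : ℝ) : ℝ := ∑ k ∈ (Finset.Icc 1 ⌊t⌋₊).filter P, Real.log k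

open ArithmeticFunction ArithmeticFunction.vonMangoldt in
theorem theta_ap (q : ℕ) [NeZero q] (a : ZMod q) (ha : IsUnit a) :
    Tendsto (fun n : ℕ => tht (fun k => k.Prime ∧ (k : ZMod q) = a) n / n) atTop (𝓝 ((q.totient : ℝ)⁻¹)) := by
  have h1 := pnt_ap_psi q a ha
  have hz : Tendsto (fun n : ℕ => 2 * (Real.log n / (n:ℝ) ^ (1/2 : ℝ))) atTop (𝓝 0) := by
    have := (isLittleO_log_rpow_atTop (r := 1/2) (by norm_num)).tendsto_div_nhds_zero
    simpa using (this.comp tendsto_natCast_atTop_atTop).const_mul 2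
  have key : ∀ n : ℕ, 0 < n → (∑ k ∈ Finset.Icc 1 n, residueClass a k) / n - 2 * (Real.log n / (n:ℝ) ^ (1/2 : ℝ)) ≤
      tht (fun k => k.Prime ∧ (k : ZMod q) = a) n / n ∧ tht (fun k => k.Prime ∧ (k : ZMod q) = a) n / n
        ≤ (∑ k ∈ Finset.Icc 1 n, residueClass a k) / n := by
    intro n hn
    have hn' : (1:ℝ) ≤ n := by exact_mod_cast hn
    have e1 : ∑ k ∈ Finset.Icc 1 n, residueClass a k - tht (fun k => k.Prime ∧ (k : ZMod q) = a) n
       = ∑ k ∈ Finset.Icc 1 n, if k.Prime then 0 else residueClass a k := by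
      rw [tht, Finset.sum_filter, Nat.floor_natCast, ← Finset.sum_sub_distrib]
      apply Finset.sum_congr rfl
      intro k _
      by_cases hk : k.Prime
      · by_cases hka : (k : ZMod q) = a
        · simp [hk, hka, residueClass, vonMangoldt_apply_prime hk]
        · simp [hk, hka, residueClass]
      · simp [hk]
    have e2 : 0 ≤ ∑ k ∈ Finset.Icc 1 n, (if k.Prime then 0 else residueClass a k) := by
      apply Finset.sum_nonneg
      intro k _
      split_ifs
      · exact le_rfl
      · exact residueClass_nonneg a k
    have e3 : ∑ k ∈ Finset.Icc 1 n, (if k.Prime then 0 else residueClass a k) ≤ 2 * √(n:ℝ) * Real.log n := by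
      refine le_trans ?_ (Chebyshev.psi_sub_theta_le hn')
      rw [Chebyshev.psi_sub_theta_eq_sum_not_prime, Nat.floor_natCast, Finset.sum_filter]
      apply Finset.sum_le_sum
      intro k _
      by_cases hk : k.Prime
      · simp [hk]
      · simp only [hk, if_false, not_false_eq_true, if_true]
        exact residueClass_le a k
    have e4 : 2 * √(n:ℝ) * Real.log n / n = 2 * (Real.log n / (n:ℝ) ^ (1/2 : ℝ)) := by
      rw [← Real.sqrt_eq_rpow]
      have h0 : (0:ℝ) < √(n:ℝ) := Real.sqrt_pos.2 (by linarith)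
      have := Real.mul_self_sqrt (show (0:ℝ) ≤ n by linarith)
      field_simp
      rw [sq, this]; ring
    constructor
    · rw [← e4, ← sub_div]
      gcongr
      linarith
    · gcongr
      linarith
  have hlow := h1.sub hz
  rw [sub_zero] at hlow
  refine tendsto_of_tendsto_of_tendsto_of_le_of_le' hlow h1 ?_ ?_
  · filter_upwards [eventually_gt_atTop 0] with n hn using (key n hn).1
  · filter_upwards [eventually_gt_atTop 0] with n hn using (key n hn).2

theorem theta_set (q : ℕ) [NeZero q] (A : Finset (ZMod q)) (hA : ∀ a ∈ A, IsUnit a) :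
    Tendsto (fun n : ℕ => tht (fun k => k.Prime ∧ (k : ZMod q) ∈ A) n / n) atTop (𝓝 (A.card * (q.totient : ℝ)⁻¹)) := by
  have h := tendsto_finsetSum A (fun a ha => theta_ap q a (hA a ha))
  rw [Finset.sum_const, nsmul_eq_mul] at h
  refine h.congr fun n => ?_
  rw [← Finset.sum_div]
  congr 1
  simp only [tht, Finset.sum_filter]
  rw [Finset.sum_comm]
  apply Finset.sum_congr rfl
  intro k _
  by_cases hk : k.Prime
  · simp [hk]
  · simp [hk]

theorem theta_real (P : ℕ → Prop) (c : ℝ) (h : Tendsto (fun n : ℕ => tht P n / n) atTop (𝓝 c)) :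
    Tendsto (fun t : ℝ => tht P t / t) atTop (𝓝 c) := by
  have h1 := (h.comp (tendsto_nat_floor_atTop (α := ℝ))).mul (tendsto_nat_floor_div_atTop (R := ℝ))
  rw [mul_one] at h1
  refine h1.congr' ?_
  filter_upwards [eventually_ge_atTop 1] with t ht
  have : (0:ℝ) < ⌊t⌋₊ := by exact_mod_cast Nat.floor_pos.2 ht
  simp only [Function.comp, tht, Nat.floor_natCast]
  field_simp

theorem cnt_lim (P : ℕ → Prop) (c : ℝ) 
    (h : Tendsto (fun n : ℕ => tht P n / n) atTop (𝓝 c)) :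
    Tendsto (fun t : ℝ => cnt P t * Real.log t / t) atTop (𝓝 c) := by
  have hr := theta_real P c h
  have low : ∀ t : ℝ, 1 ≤ t → tht P t ≤ cnt P t * Real.log t := by
    intro t ht
    rw [tht, cnt, ← nsmul_eq_mul]
    apply Finset.sum_le_card_nsmul
    intro k hk
    simp only [Finset.mem_filter, Finset.mem_Icc] at hk
    have : (k:ℝ) ≤ t := (Nat.le_floor_iff (by linarith)).1 hk.1.2
    have hk0 : (0:ℝ) < k := by exact_mod_cast hk.1.1
    exact Real.log_le_log hk0 this
  have up : ∀ η : ℝ, 0 < η → η < 1 → ∀ t : ℝ, 1 < t → 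
      cnt P t * Real.log t / t ≤ Real.log t / t ^ η + (tht P t / t) / (1 - η) := by
    intro η h0 h1 t ht
    have ht0 : 0 < t := by linarith
    have hl : 0 < Real.log t := Real.log_pos ht
    set z := t ^ (1 - η) with hz
    have hzpos : 0 < z := Real.rpow_pos_of_pos ht0 _
    have key : cnt P t ≤ z + tht P t / ((1 - η) * Real.log t) := by
      have hsplit : cnt P t = ((((Finset.Icc 1 ⌊t⌋₊).filter P).filter (fun k : ℕ => (k:ℝ) ≤ z)).card : ℝ)
          + ((((Finset.Icc 1 ⌊t⌋₊).filter P).filter (fun k : ℕ => ¬ (k:ℝ) ≤ z)).card : ℝ) := by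
        rw [cnt, ← Nat.cast_add, Finset.card_filter_add_card_filter_not]
      rw [hsplit]
      apply add_le_add
      · have : (((Finset.Icc 1 ⌊t⌋₊).filter P).filter (fun k : ℕ => (k:ℝ) ≤ z)).card ≤ (Finset.Icc 1 ⌊z⌋₊).card := by
          apply Finset.card_le_card
          intro k hk
          simp only [Finset.mem_filter, Finset.mem_Icc] at hk ⊢
          exact ⟨hk.1.1.1, Nat.le_floor hk.2⟩
        rw [Nat.card_Icc, Nat.add_sub_cancel] at this
        calc _ ≤ ((⌊z⌋₊ : ℕ) : ℝ) := by exact_mod_cast this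
          _ ≤ z := Nat.floor_le hzpos.le
      · rw [le_div_iff₀ (by apply mul_pos; linarith; exact hl), ← nsmul_eq_mul]
        refine le_trans (Finset.card_nsmul_le_sum _ (fun k : ℕ => Real.log k) _ ?_) ?_
        · intro k hk
          simp only [Finset.mem_filter, Finset.mem_Icc, not_le] at hk
          rw [← Real.log_rpow ht0]
          exact Real.log_le_log hzpos hk.2.le
        · apply Finset.sum_le_sum_of_subset_of_nonneg (Finset.filter_subset _ _)
          intro k _ _
          exact Real.log_natCast_nonneg k
    have e1 : z / t = 1 / t ^ η := by
      rw [hz, Real.rpow_sub ht0, Real.rpow_one]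
      have := Real.rpow_pos_of_pos ht0 η
      field_simp
    calc cnt P t * Real.log t / t ≤ (z + tht P t / ((1 - η) * Real.log t)) * Real.log t / t := by gcongr
      _ = Real.log t * (z / t) + (tht P t / t) / (1 - η) := by
        have : 1 - η ≠ 0 := by linarith
        field_simp
      _ = _ := by rw [e1]; ring
  rw [tendsto_order]
  constructor
  · intro m hm
    filter_upwards [hr.eventually (lt_mem_nhds hm), eventually_ge_atTop 1] with t h1 ht
    refine lt_of_lt_of_le h1 ?_
    have := low t ht
    gcongr
  · intro m hm
    have hη : Tendsto (fun η : ℝ => 0 + c / (1 - η)) (𝓝[>] 0) (𝓝 c) := by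
      have : ContinuousAt (fun η : ℝ => 0 + c / (1 - η)) 0 := by
        apply ContinuousAt.add continuousAt_const
        apply ContinuousAt.div continuousAt_const (by fun_prop) (by norm_num)
      have := this.tendsto
      simp only [sub_zero, div_one, zero_add] at this ⊢
      exact this.mono_left nhdsWithin_le_nhds
    obtain ⟨η, hη1, hη2⟩ := ((hη.eventually (gt_mem_nhds hm)).and (Ioo_mem_nhdsGT (show (0:ℝ) < 1 by norm_num))).exists
    have T : Tendsto (fun t : ℝ => Real.log t / t ^ η + (tht P t / t) / (1 - η)) atTop (𝓝 (0 + c / (1 - η))) :=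
      ((isLittleO_log_rpow_atTop hη2.1).tendsto_div_nhds_zero).add (hr.div_const _)
    filter_upwards [T.eventually (gt_mem_nhds hη1), eventually_gt_atTop 1] with t h1 ht
    exact lt_of_le_of_lt (up η hη2.1 hη2.2 t ht) h1

end WI

namespace WI

open MeasureTheory Topology

open scoped NumberTheorySymbols

lemma jac_one_of_modEq (D : ℤ) (n : ℕ) (hn : Odd n) (h : n ≡ 1 [MOD 4 * D.natAbs]) : J(D | n) = 1 := by
  rw [jacobiSym.mod_right D hn, h, ← jacobiSym.mod_right D odd_one, jacobiSym.one_right]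

lemma exists_flip (D : ℤ) (hD : ¬ IsSquare D) : ∃ b : ℕ, Odd b ∧ J(D | b) = -1 := by
  have hD0 : D ≠ 0 := by rintro rfl; exact hD ⟨0, by simp⟩
  obtain ⟨a, s, ha, hs⟩ := Nat.sq_mul_squarefree D.natAbs
  have hs0 : s ≠ 0 := by
    rintro rfl
    simp at ha
    exact hD0 (Int.natAbs_eq_zero.1 (by omega))
  obtain ⟨σ, hσ, hDσ⟩ : ∃ σ : ℤ, σ.natAbs = 1 ∧ D = σ * (s ^ 2 * a : ℕ) := by
    rw [ha]
    rcases Int.natAbs_eq D with h | h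
    · exact ⟨1, rfl, by rw [one_mul]; exact h⟩
    · exact ⟨-1, rfl, by rw [neg_one_mul]; exact h⟩
  by_cases ha1 : a = 1
  · subst ha1
    have hσ1 : σ = -1 := by
      rcases Int.natAbs_eq σ with h | h
      · exfalso
        apply hD
        rw [hDσ, h, hσ]
        exact ⟨s, by push_cast; ring⟩
      · rw [h, hσ]; rfl
    have hs2 : 1 ≤ s ^ 2 := Nat.one_le_pow _ _ (Nat.pos_of_ne_zero hs0)
    refine ⟨4 * s ^ 2 - 1, ?_, ?_⟩
    · rw [Nat.odd_iff]; omega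
    · have hodd : Odd (4 * s ^ 2 - 1) := by rw [Nat.odd_iff]; omega
      have hcop : Nat.Coprime s (4 * s ^ 2 - 1) := by
        have h1 : Nat.Coprime (4 * s ^ 2) (4 * s ^ 2 - 1) := by
          have : 4 * s ^ 2 = (4 * s ^ 2 - 1) + 1 := by omega
          conv_lhs => rw [this]
          simp
        exact Nat.Coprime.coprime_dvd_left ⟨4 * s, by ring⟩ h1
      rw [hDσ, hσ1]
      push_cast
      rw [mul_one, jacobiSym.mul_left, jacobiSym.pow_left, jacobiSym.sq_one (by simpa [Int.gcd_natCast_natCast] using hcop), mul_one,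
        jacobiSym.at_neg_one hodd, ZMod.χ₄_nat_three_mod_four]
      omega
  · obtain ⟨p, hp, hpa⟩ := Nat.exists_prime_and_dvd ha1
    obtain ⟨a', rfl⟩ := hpa
    have hpa' : ¬ p ∣ a' := by
      intro h
      have := hs p (Nat.mul_dvd_mul_left p h)
      exact hp.one_lt.ne' (Nat.isUnit_iff.1 this)
    obtain ⟨j, s', hps', rfl⟩ := Nat.exists_eq_pow_mul_and_not_dvd hs0 p hp.ne_one
    set D' : ℤ := σ * (s' ^ 2 * a' : ℕ) with hD'
    have hDD : D = (p:ℤ) ^ (2 * j + 1) * D' := by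
      rw [hDσ, hD']; push_cast; ring
    have habs : D'.natAbs = s' ^ 2 * a' := by
      rw [hD', Int.natAbs_mul, hσ, one_mul, Int.natAbs_natCast]
    have hpD' : Nat.Coprime p D'.natAbs := by
      rw [Nat.Prime.coprime_iff_not_dvd hp, habs]
      intro h
      rcases (Nat.Prime.dvd_mul hp).1 h with h | h
      · exact hps' (hp.dvd_of_dvd_pow h)
      · exact hpa' h
    suffices ∃ b : ℕ, Odd b ∧ b ≡ 1 [MOD 4 * D'.natAbs] ∧ J((p:ℤ) | b) = -1 by
      obtain ⟨b, hb, hb1, hb2⟩ := this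
      refine ⟨b, hb, ?_⟩
      rw [hDD, jacobiSym.mul_left, jacobiSym.pow_left, hb2, jac_one_of_modEq D' b hb hb1, mul_one]
      exact Odd.neg_one_pow ⟨j, rfl⟩
    by_cases hp2 : p = 2
    · subst hp2
      have hc : Nat.Coprime 8 D'.natAbs := by
        rw [show 8 = 2 ^ 3 by norm_num]; exact Nat.Coprime.pow_left 3 hpD'
      obtain ⟨b, hb8, hbD⟩ := Nat.chineseRemainder hc 5 1
      have hb8' : b % 8 = 5 := hb8
      have hodd : Odd b := by rw [Nat.odd_iff]; omega
      refine ⟨b, hodd, ?_, ?_⟩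
      · rw [← Nat.modEq_and_modEq_iff_modEq_mul]
        · refine ⟨?_, hbD⟩
          show b % 4 = 1 % 4
          omega
        · rw [show 4 = 2 ^ 2 by norm_num]; exact Nat.Coprime.pow_left 2 hpD'
      · push_cast
        rw [jacobiSym.at_two hodd, ZMod.χ₈_nat_eq_if_mod_eight]
        have : ¬ (b % 2 = 0) := by omega
        simp [this, hb8']
    · have := Fact.mk hp
      have hpodd : Odd p := hp.odd_of_ne_two hp2
      obtain ⟨r, hr⟩ := FiniteField.exists_nonsquare (F := ZMod p) (by rw [ZMod.ringChar_zmod_n]; exact hp2)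
      have hc : Nat.Coprime (4 * D'.natAbs) p := by
        apply Nat.Coprime.mul_left _ hpD'.symm
        rw [show 4 = 2 ^ 2 by norm_num]
        apply Nat.Coprime.pow_left
        exact (Nat.coprime_primes Nat.prime_two hp).2 (Ne.symm hp2)
      obtain ⟨b, hb4, hbp⟩ := Nat.chineseRemainder hc 1 r.val
      have hb44 : b % 4 = 1 := (Nat.ModEq.of_mul_right _ hb4)
      have hodd : Odd b := by rw [Nat.odd_iff]; omega
      refine ⟨b, hodd, hb4, ?_⟩
      rw [← jacobiSym.quadratic_reciprocity_one_mod_four hb44 hpodd, ← jacobiSym.legendreSym.to_jacobiSym,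
        legendreSym.eq_neg_one_iff]
      have : ((b : ℤ) : ZMod p) = r := by
        have := (ZMod.natCast_eq_natCast_iff _ _ _).2 hbp
        simpa using this
      rw [this]
      exact hr

/-- residue classes with given symbol -/
noncomputable def cls (D : ℤ) (N : ℕ) [NeZero N] (e : ℤ) : Finset (ZMod N) :=
  Finset.univ.filter fun a => IsUnit a ∧ J(D | a.val) = e

lemma cls_val (D : ℤ) (N : ℕ) (hN : N = 4 * D.natAbs) (n : ℕ) (hn : Odd n) :
    J(D | (n : ZMod N).val) = J(D | n) := by
  rw [ZMod.val_natCast, jacobiSym.mod_right D hn, hN]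

lemma odd_of_unit (D : ℤ) (N : ℕ) (hN : N = 4 * D.natAbs) [NeZero N] (a : ZMod N) (ha : IsUnit a) : Odd a.val := by
  have h1 : Nat.Coprime a.val N := by
    have := (ZMod.isUnit_iff_coprime a.val N).1 (by simpa using ha)
    exact this
  have hd : 2 ∣ N := ⟨2 * D.natAbs, by rw [hN]; ring⟩
  have : Nat.Coprime a.val 2 := h1.coprime_dvd_right hd
  exact Nat.coprime_two_right.1 this

lemma cls_le (D : ℤ) (N : ℕ) (hN : N = 4 * D.natAbs) [NeZero N] (hD : ¬ IsSquare D) (e : ℤ) :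
    (cls D N e).card ≤ (cls D N (-e)).card := by
  obtain ⟨b, hb, hbD⟩ := exists_flip D hD
  have hbN : Nat.Coprime b N := by
    rw [hN]
    apply Nat.Coprime.mul_right
    · rw [show 4 = 2 ^ 2 by norm_num]
      exact Nat.Coprime.pow_right 2 (Nat.coprime_two_right.2 hb)
    · have hb0 : NeZero b := ⟨by rintro rfl; simp at hb⟩
      by_contra hcon
      have : J(D | b) = 0 := by
        rw [jacobiSym.eq_zero_iff_not_coprime]
        intro h
        apply hcon
        rw [Int.gcd_eq_natAbs] at h
        simp at h
        exact Nat.Coprime.symm h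
      rw [this] at hbD; norm_num at hbD
  have hbu : IsUnit (b : ZMod N) := (ZMod.isUnit_iff_coprime b N).2 hbN
  apply Finset.card_le_card_of_injOn (fun a => a * (b : ZMod N))
  · intro a ha
    simp only [cls, Finset.coe_filter, Finset.mem_univ, true_and, Set.mem_ofPred_eq] at ha ⊢
    refine ⟨ha.1.mul hbu, ?_⟩
    have hodd := odd_of_unit D N hN a ha.1
    have h1 : a * (b : ZMod N) = ((a.val * b : ℕ) : ZMod N) := by simp
    have : NeZero a.val := ⟨by intro h; rw [h] at hodd; simp at hodd⟩
    have : NeZero b := ⟨by rintro rfl; simp at hb⟩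
    rw [h1, cls_val D N hN _ (hodd.mul hb), jacobiSym.mul_right, ha.2, hbD]
    ring
  · intro a _ a' _ h
    exact hbu.mul_right_cancel h

lemma cls_card (D : ℤ) (N : ℕ) (hN : N = 4 * D.natAbs) [NeZero N] (hD : ¬ IsSquare D) (e : ℤ) (he : e = 1 ∨ e = -1) :
    (cls D N e).card * 2 = N.totient := by
  have h1 : (cls D N e).card = (cls D N (-e)).card := by
    apply le_antisymm (cls_le D N hN hD e)
    simpa using cls_le D N hN hD (-e)
  have h2 : (cls D N e).card + (cls D N (-e)).card = N.totient := by
    rw [← ZMod.card_units_eq_totient, ← Finset.card_union_of_disjoint]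
    · have : (cls D N e) ∪ (cls D N (-e)) = (Finset.univ : Finset (ZMod N)ˣ).map ⟨Units.val, Units.val_injective⟩ := by
        ext a
        simp only [cls, Finset.mem_union, Finset.mem_filter, Finset.mem_univ, true_and, Finset.mem_map,
          Function.Embedding.coeFn_mk]
        constructor
        · rintro (h | h)
          · exact h.1
          · exact h.1
        · rintro h
          have hu : IsUnit a := h
          have : J(D | a.val) = 1 ∨ J(D | a.val) = -1 := by
            apply jacobiSym.eq_one_or_neg_one
            have h3 : Nat.Coprime a.val N := (ZMod.isUnit_iff_coprime a.val N).1 (by simpa using hu)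
            have hd : D.natAbs ∣ N := ⟨4, by rw [hN]; ring⟩
            rw [Int.gcd_eq_natAbs]
            rw [Int.natAbs_natCast]
            exact (h3.coprime_dvd_right hd).symm
          rcases he with rfl | rfl <;> rcases this with h4 | h4 <;> simp [hu, h4]
      rw [this, Finset.card_map, Finset.card_univ]
    · rw [Finset.disjoint_left]
      intro a ha hb
      simp only [cls, Finset.mem_filter, Finset.mem_univ, true_and] at ha hb
      rw [ha.2] at hb
      rcases he with rfl | rfl <;> norm_num at hb
  omega

lemma tht_congr (P Q : ℕ → Prop) (K : ℕ) (h : ∀ k > K, P k ↔ Q k) (c : ℝ)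
    (hQ : Tendsto (fun n : ℕ => tht Q n / n) atTop (𝓝 c)) :
    Tendsto (fun n : ℕ => tht P n / n) atTop (𝓝 c) := by
  have h1 : Tendsto (fun n : ℕ => tht Q n / n + (tht P K - tht Q K) / n) atTop (𝓝 (c + 0)) :=
    hQ.add (tendsto_const_nhds.div_atTop tendsto_natCast_atTop_atTop)
  rw [add_zero] at h1
  refine h1.congr' ?_
  filter_upwards [eventually_ge_atTop K] with n hn
  rw [← add_div]
  congr 1
  have : tht P n - tht Q n = tht P K - tht Q K := by
    simp only [tht, Nat.floor_natCast, Finset.sum_filter, ← Finset.sum_sub_distrib]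
    symm
    apply Finset.sum_subset (Finset.Icc_subset_Icc_right hn)
    intro k hk hk'
    simp only [Finset.mem_Icc, not_and, not_le] at hk hk'
    simp [h k (hk' hk.1)]
  linarith

/-- primes with given symbol -/
def PS (D e : ℤ) (p : ℕ) : Prop := p.Prime ∧ jacobiSym D p = e

theorem cnt_PS (D : ℤ) (hD : ¬ IsSquare D) (e : ℤ) (he : e = 1 ∨ e = -1) :
    Tendsto (fun t : ℝ => cnt (PS D e) t * Real.log t / t) atTop (𝓝 (1 / 2)) := by
  apply cnt_lim
  have hD0 : D ≠ 0 := by rintro rfl; exact hD ⟨0, by simp⟩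
  set N := 4 * D.natAbs with hN
  have : NeZero N := ⟨by rw [hN]; simp [hD0]⟩
  have h1 := theta_set N (cls D N e) (fun a ha => by
    simp only [cls, Finset.mem_filter] at ha; exact ha.2.1)
  have h2 : ((cls D N e).card : ℝ) * (N.totient : ℝ)⁻¹ = 1 / 2 := by
    have h3 := cls_card D N hN hD e he
    have h4 : (0:ℝ) < N.totient := by exact_mod_cast Nat.totient_pos.2 (Nat.pos_of_ne_zero (NeZero.ne N))
    have h5 : ((cls D N e).card : ℝ) * 2 = N.totient := by exact_mod_cast h3
    rw [← h5] at h4 ⊢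
    have hc : ((cls D N e).card : ℝ) ≠ 0 := by
      intro h; rw [h] at h4; simp at h4
    field_simp
  rw [h2] at h1
  refine tht_congr _ _ 2 ?_ _ h1
  intro p hp2
  unfold PS
  apply and_congr_right
  intro hp
  have hodd : Odd p := hp.odd_of_ne_two (by omega)
  simp only [cls, Finset.mem_filter, Finset.mem_univ, true_and, cls_val D N hN p hodd]
  constructor
  · intro h
    refine ⟨?_, h⟩
    rw [ZMod.isUnit_iff_coprime, hN]
    apply Nat.Coprime.mul_right
    · rw [show 4 = 2 ^ 2 by norm_num]
      exact Nat.Coprime.pow_right 2 (Nat.coprime_two_right.2 hodd)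
    · have : NeZero p := ⟨hp.ne_zero⟩
      by_contra hcon
      have : J(D | p) = 0 := by
        rw [jacobiSym.eq_zero_iff_not_coprime]
        intro h
        apply hcon
        rw [Int.gcd_eq_natAbs] at h
        simp at h
        exact Nat.Coprime.symm h
      rw [this] at h
      rcases he with rfl | rfl <;> norm_num at h
  · exact fun h => h.2

theorem cnt_prime :
    Tendsto (fun t : ℝ => cnt Nat.Prime t * Real.log t / t) atTop (𝓝 1) := by
  apply cnt_lim
  have h1 := theta_set 1 Finset.univ (fun a _ => by
    have : a = 1 := Subsingleton.elim _ _
    rw [this]; exact isUnit_one)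
  have h2 : (fun k : ℕ => k.Prime ∧ (k : ZMod 1) ∈ (Finset.univ : Finset (ZMod 1))) = Nat.Prime := by
    ext k; simp only [Finset.mem_univ, and_true]
  rw [h2] at h1
  simpa using h1

end WI

namespace WI

open MeasureTheory Topology

lemma abel_sum (d : ℕ → ℝ) (h0 : d 0 = 0) (n : ℕ) :
    ∑ j ∈ Finset.range (n + 1), d j / j = (∑ j ∈ Finset.range (n + 1), d j) / (n + 1 : ℝ)
      + ∑ j ∈ Finset.range (n + 1), (∑ i ∈ Finset.range (j + 1), d i) / ((j : ℝ) * (j + 1)) := by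
  induction n with
  | zero => simp [h0]
  | succ n ih =>
    rw [Finset.sum_range_succ, ih, Finset.sum_range_succ (fun j => (∑ i ∈ Finset.range (j + 1), d i) / ((j : ℝ) * (j + 1))) (n + 1),
      Finset.sum_range_succ d (n + 1)]
    push_cast
    have h1 : (n : ℝ) + 1 ≠ 0 := by positivity
    have h2 : (n : ℝ) + 1 + 1 ≠ 0 := by positivity
    field_simp
    ring

lemma sum_equiv (u v : ℕ → ℝ) (h : u ~[atTop] v) (hv : 0 ≤ v)
    (hs : Tendsto (fun n => ∑ i ∈ Finset.range n, v i) atTop atTop) :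
    (fun n => ∑ i ∈ Finset.range n, u i) ~[atTop] (fun n => ∑ i ∈ Finset.range n, v i) := by
  have := IsLittleO.sum_range h hv hs
  refine this.congr_left fun n => ?_
  simp [Finset.sum_sub_distrib]

/-- indicator weights `1_P(j)/j` -/
noncomputable def wt (P : ℕ → Prop) (j : ℕ) : ℝ := if P j then 1 / (j : ℝ) else 0

noncomputable def RS (P : ℕ → Prop) (n : ℕ) : ℝ := ∑ j ∈ Finset.range n, wt P j

lemma wt_nonneg (P : ℕ → Prop) (j : ℕ) : 0 ≤ wt P j := by
  unfold wt; split_ifs <;> positivity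

lemma wt_le_one (P : ℕ → Prop) (j : ℕ) : wt P j ≤ 1 := by
  unfold wt; split_ifs
  · rw [one_div]; exact Nat.cast_inv_le_one j
  · norm_num

lemma RS_nonneg (P : ℕ → Prop) (n : ℕ) : 0 ≤ RS P n := Finset.sum_nonneg fun _ _ => wt_nonneg _ _

lemma RS_prime_tendsto : Tendsto (RS Nat.Prime) atTop atTop := by
  have h := not_summable_one_div_on_primes
  rw [not_summable_iff_tendsto_nat_atTop_of_nonneg] at h
  · refine h.congr fun n => ?_
    unfold RS
    refine Finset.sum_congr rfl fun j _ => ?_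
    simp [wt, Set.indicator_apply]
  · intro n
    simp only [Set.indicator_apply]
    split_ifs <;> positivity

lemma cnt_range (P : ℕ → Prop) [DecidablePred P] (h0 : ¬ P 0) (n : ℕ) :
    ∑ j ∈ Finset.range (n + 1), (if P j then (1:ℝ) else 0) = cnt P n := by
  unfold cnt
  rw [Nat.floor_natCast, Finset.card_filter]
  push_cast
  rw [Finset.sum_range_eq_add_Ico _ (by omega)]
  simp only [h0, if_false, zero_add]
  rfl

lemma cnt_nonneg (P : ℕ → Prop) (t : ℝ) : 0 ≤ cnt P t := by unfold cnt; positivity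

lemma cnt_le (P : ℕ → Prop) (n : ℕ) : cnt P n ≤ n := by
  unfold cnt
  rw [Nat.floor_natCast]
  have := Finset.card_filter_le (Finset.Icc 1 n) P
  simp only [Nat.card_Icc, Nat.add_sub_cancel] at this
  exact_mod_cast this

lemma cnt_diff (P : ℕ → Prop) (c : ℝ)
    (h : Tendsto (fun t : ℝ => cnt P t * Real.log t / t) atTop (𝓝 c)) :
    (fun n : ℕ => cnt P n - c * cnt Nat.Prime n) =o[atTop] (fun n : ℕ => cnt Nat.Prime n) := by
  have hp := cnt_prime.comp (tendsto_natCast_atTop_atTop (R := ℝ))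
  have hq := h.comp (tendsto_natCast_atTop_atTop (R := ℝ))
  have h1 : Tendsto (fun n : ℕ => (cnt P n * Real.log n / n) / (cnt Nat.Prime n * Real.log n / n) - c) atTop (𝓝 (c / 1 - c)) :=
    (hq.div hp one_ne_zero).sub tendsto_const_nhds
  rw [div_one, sub_self] at h1
  have hpos : ∀ᶠ n : ℕ in atTop, 0 < cnt Nat.Prime n * Real.log n / n :=
    hp.eventually (lt_mem_nhds one_pos)
  rw [isLittleO_iff_tendsto']
  · refine h1.congr' ?_
    filter_upwards [hpos, eventually_gt_atTop 1] with n hn h1n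
    have hl : 0 < Real.log n := Real.log_pos (by exact_mod_cast h1n)
    have hn0 : (0:ℝ) < n := by positivity
    have hc : cnt Nat.Prime n ≠ 0 := by
      intro h; rw [h] at hn; simp at hn
    field_simp
  · filter_upwards [hpos] with n hn h
    rw [h] at hn; simp at hn

theorem RS_equiv (P : ℕ → Prop) (hP : ∀ p, P p → p.Prime) (c : ℝ)
    (h : Tendsto (fun t : ℝ => cnt P t * Real.log t / t) atTop (𝓝 c)) :
    Tendsto (fun n => RS P n / RS Nat.Prime n) atTop (𝓝 c) := by
  have hP0 : ¬ P 0 := fun h => Nat.not_prime_zero (hP 0 h)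
  have hd := cnt_diff P c h
  set d : ℕ → ℝ := fun j => (if P j then (1:ℝ) else 0) - c * (if j.Prime then (1:ℝ) else 0) with hdd
  have hdsum : ∀ n, ∑ j ∈ Finset.range (n + 1), d j = cnt P n - c * cnt Nat.Prime n := by
    intro n
    rw [hdd, Finset.sum_sub_distrib, ← Finset.mul_sum, cnt_range P hP0, cnt_range _ Nat.not_prime_zero]
  have hd0 : d 0 = 0 := by simp [hdd, hP0, Nat.not_prime_zero]
  have e1 : ∀ n, RS P (n+1) - c * RS Nat.Prime (n+1) = (cnt P n - c * cnt Nat.Prime n) / (n + 1 : ℝ)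
      + ∑ j ∈ Finset.range (n + 1), (cnt P j - c * cnt Nat.Prime j) / ((j : ℝ) * (j + 1)) := by
    intro n
    have := abel_sum d hd0 n
    simp only [hdsum] at this
    rw [← this]
    unfold RS
    rw [Finset.mul_sum, ← Finset.sum_sub_distrib]
    refine Finset.sum_congr rfl fun j _ => ?_
    simp only [wt, hdd]
    split_ifs <;> ring
  have e2 : ∀ n, RS Nat.Prime (n+1) = cnt Nat.Prime n / (n + 1 : ℝ)
      + ∑ j ∈ Finset.range (n + 1), cnt Nat.Prime j / ((j : ℝ) * (j + 1)) := by
    intro n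
    have := abel_sum (fun j => if j.Prime then (1:ℝ) else 0) (by simp [Nat.not_prime_zero]) n
    simp only [cnt_range _ Nat.not_prime_zero] at this
    rw [← this]
    unfold RS
    refine Finset.sum_congr rfl fun j _ => ?_
    simp only [wt]
    split_ifs <;> ring
  have hT1 : Tendsto (fun n => RS Nat.Prime (n+1)) atTop atTop := RS_prime_tendsto.comp (tendsto_add_atTop_nat 1)
  have hb : ∀ n : ℕ, cnt Nat.Prime n / (n + 1 : ℝ) ≤ 1 := fun n => by
    rw [div_le_one (by positivity)]; linarith [cnt_le Nat.Prime n]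
  have hb0 : ∀ n : ℕ, 0 ≤ cnt Nat.Prime n / (n + 1 : ℝ) := fun n => div_nonneg (cnt_nonneg _ _) (by positivity)
  have hV1 : Tendsto (fun n => ∑ j ∈ Finset.range (n + 1), cnt Nat.Prime j / ((j : ℝ) * (j + 1))) atTop atTop := by
    refine tendsto_atTop_mono (f := fun n => RS Nat.Prime (n+1) + (-1)) ?_ (tendsto_atTop_add_const_right _ _ hT1)
    intro n
    have := hb n
    rw [e2]; linarith
  have hV : Tendsto (fun n => ∑ j ∈ Finset.range n, cnt Nat.Prime j / ((j : ℝ) * (j + 1))) atTop atTop :=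
    (tendsto_add_atTop_iff_nat 1).1 hV1
  have hs := IsLittleO.sum_range (f := fun j : ℕ => (cnt P j - c * cnt Nat.Prime j) / ((j : ℝ) * (j + 1)))
    (g := fun j : ℕ => cnt Nat.Prime j / ((j : ℝ) * (j + 1)))
    (by
      simp only [div_eq_mul_inv]
      exact hd.mul_isBigO (isBigO_refl _ _))
    (fun j => div_nonneg (cnt_nonneg _ _) (by positivity)) hV
  have hs1 := hs.comp_tendsto (tendsto_add_atTop_nat 1)
  have k1 : (fun n => RS P (n+1) - c * RS Nat.Prime (n+1)) =o[atTop] (fun n => RS Nat.Prime (n+1)) := by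
    simp only [e1]
    apply IsLittleO.add
    · have : (fun n : ℕ => (cnt P n - c * cnt Nat.Prime n) / (n + 1 : ℝ)) =o[atTop] (fun n : ℕ => cnt Nat.Prime n / (n + 1 : ℝ)) := by
        simp only [div_eq_mul_inv]
        exact hd.mul_isBigO (isBigO_refl _ _)
      refine this.trans_isBigO (IsBigO.of_bound 1 (Eventually.of_forall fun n => ?_))
      rw [Real.norm_of_nonneg (hb0 n), Real.norm_of_nonneg (RS_nonneg _ _), e2, one_mul]
      have : 0 ≤ ∑ j ∈ Finset.range (n + 1), cnt Nat.Prime j / ((j : ℝ) * (j + 1)) :=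
        Finset.sum_nonneg fun j _ => div_nonneg (cnt_nonneg _ _) (by positivity)
      linarith
    · refine hs1.trans_isBigO (IsBigO.of_bound 1 (Eventually.of_forall fun n => ?_))
      have : 0 ≤ ∑ j ∈ Finset.range (n + 1), cnt Nat.Prime j / ((j : ℝ) * (j + 1)) :=
        Finset.sum_nonneg fun j _ => div_nonneg (cnt_nonneg _ _) (by positivity)
      simp only [Function.comp]
      rw [Real.norm_of_nonneg this, Real.norm_of_nonneg (RS_nonneg _ _), e2, one_mul]
      linarith [hb0 n]
  have k2 := (k1.tendsto_div_nhds_zero).add_const c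
  rw [zero_add] at k2
  rw [← tendsto_add_atTop_iff_nat 1]
  refine k2.congr' ?_
  filter_upwards [hT1.eventually_gt_atTop 0] with n hn
  field_simp
  ring

lemma pow_sum (a : ℕ → ℝ) (ha : ∀ j, 0 ≤ a j) (ha1 : ∀ j, a j ≤ 1) (A : ℕ → ℝ)
    (hA : ∀ n, A n = ∑ j ∈ Finset.range n, a j) (hT : Tendsto A atTop atTop) (k : ℕ) :
    (fun n => ∑ j ∈ Finset.range n, a j * A j ^ k) ~[atTop] (fun n => A n ^ (k + 1) / (k + 1)) := by
  have hsucc : ∀ j, A (j + 1) = A j + a j := fun j => by rw [hA, hA, Finset.sum_range_succ]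
  have hA0 : ∀ j, 0 ≤ A j := fun j => by rw [hA]; exact Finset.sum_nonneg fun i _ => ha i
  set f : ℕ → ℝ := fun j => (A (j+1) ^ (k+1) - A j ^ (k+1)) / (k + 1) with hf
  have hfs : ∀ n, ∑ j ∈ Finset.range n, f j = A n ^ (k+1) / (k+1) := by
    intro n
    rw [hf, ← Finset.sum_div, Finset.sum_range_sub (fun j => A j ^ (k+1))]
    rw [hA 0]; simp
  have hf0 : 0 ≤ f := by
    intro j
    simp only [hf, Pi.zero_apply]
    apply div_nonneg _ (by positivity)
    rw [sub_nonneg]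
    apply pow_le_pow_left₀ (hA0 j)
    rw [hsucc]; linarith [ha j]
  have hr : Tendsto (fun j => A (j+1) / A j) atTop (𝓝 1) := by
    have h1 : Tendsto (fun j => a j / A j) atTop (𝓝 0) := by
      apply squeeze_zero' (g := fun j => 1 / A j)
      · exact Eventually.of_forall fun j => div_nonneg (ha j) (hA0 j)
      · exact Eventually.of_forall fun j => div_le_div_of_nonneg_right (ha1 j) (hA0 j)
      · exact tendsto_const_nhds.div_atTop hT
    have h2 := h1.const_add 1
    rw [add_zero] at h2
    refine h2.congr' ?_
    filter_upwards [hT.eventually_gt_atTop 0] with j hj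
    rw [hsucc]; field_simp
  have hg : Tendsto (fun j => (∑ i ∈ Finset.range (k+1), (A (j+1) / A j) ^ i) / (k+1) - 1) atTop (𝓝 0) := by
    have := (tendsto_finsetSum (Finset.range (k+1)) (fun i _ => hr.pow i))
    have := (this.div_const ((k:ℝ)+1)).sub_const 1
    convert this using 2
    simp
    rw [div_self (by positivity)]; simp
  have key : f ~[atTop] (fun j => a j * A j ^ k) := by
    have h1 : (fun j => (a j * A j ^ k) * ((∑ i ∈ Finset.range (k+1), (A (j+1) / A j) ^ i) / (k+1) - 1))
        =o[atTop] (fun j => (a j * A j ^ k) * 1) :=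
      (isBigO_refl _ _).mul_isLittleO ((isLittleO_one_iff ℝ).2 hg)
    refine h1.congr' ?_ (Eventually.of_forall fun j => mul_one _)
    filter_upwards [hT.eventually_gt_atTop 0] with j hj
    simp only [Pi.sub_apply, hf]
    have h2 := geom_sum_mul (A (j+1) / A j) (k+1)
    have h3 : A (j+1) / A j - 1 = a j / A j := by rw [hsucc]; field_simp; ring
    rw [h3] at h2
    have h4 : a j * A j ^ k * (∑ i ∈ Finset.range (k+1), (A (j+1) / A j) ^ i) = A (j+1)^(k+1) - A j^(k+1) := by
      calc _ = A j ^ (k+1) * ((∑ i ∈ Finset.range (k+1), (A (j+1) / A j) ^ i) * (a j / A j)) := by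
            field_simp; ring
        _ = _ := by
            rw [h2, div_pow]; field_simp
    rw [← h4]; ring
  have := sum_equiv _ f key.symm hf0 (by
    simp only [hfs]
    exact ((tendsto_pow_atTop (by omega)).comp hT).atTop_div_const (by positivity))
  simpa only [hfs] using this

/-- the weighted sums -/
noncomputable def EE (P : ℕ → ℕ → Prop) : ℕ → ℕ → ℝ
  | 0, _ => 1
  | k + 1, n => ∑ j ∈ Finset.range n, wt (P k) j * EE P k j

theorem EE_equiv (P : ℕ → ℕ → Prop) (hP : ∀ i p, P i p → p.Prime) (c : ℕ → ℝ) (hc : ∀ i, 0 < c i)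
    (h : ∀ i, Tendsto (fun t : ℝ => cnt (P i) t * Real.log t / t) atTop (𝓝 (c i))) (k : ℕ) :
    EE P k ~[atTop] (fun n => (∏ i ∈ Finset.range k, c i) * RS Nat.Prime n ^ k / k.factorial) := by
  induction k with
  | zero =>
    have : EE P 0 = fun n => (∏ i ∈ Finset.range 0, c i) * RS Nat.Prime n ^ 0 / (Nat.factorial 0) := by
      ext n; simp [EE]
    rw [this]
  | succ k ih =>
    have hck := hc k
    have hTT := RS_prime_tendsto
    have hratio := RS_equiv (P k) (hP k) (c k) (h k)
    have hAeq : RS (P k) ~[atTop] (fun n => c k * RS Nat.Prime n) := by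
      rw [isEquivalent_iff_tendsto_one]
      · have := hratio.div_const (c k)
        rw [div_self hck.ne'] at this
        refine this.congr fun n => ?_
        simp only [Pi.div_apply]
        rw [div_div, mul_comm]
      · filter_upwards [hTT.eventually_gt_atTop 0] with n hn
        positivity
    have hAT : Tendsto (RS (P k)) atTop atTop :=
      hAeq.symm.tendsto_atTop (hTT.const_mul_atTop hck)
    set C : ℝ := (∏ i ∈ Finset.range k, c i) / k.factorial / c k ^ k with hC
    have hCpos : 0 < C := by
      have : 0 < ∏ i ∈ Finset.range k, c i := Finset.prod_pos fun i _ => hc i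
      positivity
    have t1 : (fun n => EE P k n) ~[atTop] (fun n => C * RS (P k) n ^ k) := by
      refine ih.trans ?_
      have := (IsEquivalent.refl (u := fun _ : ℕ => C)).mul (hAeq.symm.pow k)
      refine IsEquivalent.congr_left this (Eventually.of_forall fun n => ?_)
      simp only [Pi.mul_apply, Pi.pow_apply, hC, mul_pow]
      field_simp
    have ps := pow_sum (wt (P k)) (wt_nonneg _) (wt_le_one _) (RS (P k)) (fun n => rfl) hAT k
    have t2 : (fun j => wt (P k) j * EE P k j) ~[atTop] (fun j => C * (wt (P k) j * RS (P k) j ^ k)) := by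
      have := (IsEquivalent.refl (u := wt (P k))).mul t1
      refine IsEquivalent.congr_right this (Eventually.of_forall fun n => ?_)
      simp only [Pi.mul_apply]; ring
    have hsT : Tendsto (fun n => ∑ j ∈ Finset.range n, (wt (P k) j * RS (P k) j ^ k)) atTop atTop :=
      ps.symm.tendsto_atTop (((tendsto_pow_atTop (by omega)).comp hAT).atTop_div_const (by positivity))
    have t3 := sum_equiv _ _ t2 (fun j => mul_nonneg hCpos.le (mul_nonneg (wt_nonneg _ _) (pow_nonneg (RS_nonneg _ _) _)))
      (by simp only [← Finset.mul_sum]; exact hsT.const_mul_atTop hCpos)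
    simp only [← Finset.mul_sum] at t3
    have t4 := (IsEquivalent.refl (u := fun _ : ℕ => C)).mul (ps.trans
      ((hAeq.pow (k+1)).div (IsEquivalent.refl (u := fun _ : ℕ => (k+1:ℝ)))))
    have t5 := t3.trans t4
    refine IsEquivalent.congr_right t5 (Eventually.of_forall fun n => ?_)
    simp only [Pi.mul_apply, Pi.pow_apply, Pi.div_apply, hC, Finset.prod_range_succ, Nat.factorial_succ]
    push_cast
    rw [mul_pow]
    field_simp
    ring

end WI

namespace WI

open MeasureTheory Topology

lemma RS_abel (n : ℕ) : RS Nat.Prime (n+1) = cnt Nat.Prime n / (n + 1 : ℝ)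
      + ∑ j ∈ Finset.range (n + 1), cnt Nat.Prime j / ((j : ℝ) * (j + 1)) := by
  have := abel_sum (fun j => if j.Prime then (1:ℝ) else 0) (by simp [Nat.not_prime_zero]) n
  simp only [cnt_range _ Nat.not_prime_zero] at this
  rw [← this]
  unfold RS
  refine Finset.sum_congr rfl fun j _ => ?_
  simp only [wt]
  split_ifs <;> ring

lemma RS_mono (P : ℕ → Prop) : Monotone (RS P) := by
  intro a b h
  exact Finset.sum_le_sum_of_subset_of_nonneg (Finset.range_mono h) fun i _ _ => wt_nonneg _ _

lemma RS_diff : ∃ n0 : ℕ, ∀ w n : ℕ, n0 ≤ w → w ≤ n →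
    RS Nat.Prime n - RS Nat.Prime w ≤ 2 + 2 * (1 + Real.log (n + 1)) / Real.log w := by
  have h1 : ∀ᶠ n : ℕ in atTop, cnt Nat.Prime n * Real.log n / n < 2 :=
    (cnt_prime.comp (tendsto_natCast_atTop_atTop (R := ℝ))).eventually (gt_mem_nhds (by norm_num))
  obtain ⟨n0, hn0⟩ := eventually_atTop.1 h1
  refine ⟨max n0 2, fun w n hw hwn => ?_⟩
  have hw2 : 2 ≤ w := le_trans (le_max_right _ _) hw
  have hw0 : n0 ≤ w := le_trans (le_max_left _ _) hw
  have hlw : 0 < Real.log w := Real.log_pos (by exact_mod_cast (by omega : 1 < w))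
  have a1 : RS Nat.Prime n ≤ RS Nat.Prime (n+1) := RS_mono _ (Nat.le_succ n)
  have a2 : RS Nat.Prime (w+1) ≤ RS Nat.Prime w + 1 := by
    unfold RS; rw [Finset.sum_range_succ]; linarith [wt_le_one Nat.Prime w]
  have a3 : RS Nat.Prime (n+1) - RS Nat.Prime (w+1) ≤ 1 +
      ∑ j ∈ Finset.Ico (w+1) (n+1), cnt Nat.Prime j / ((j : ℝ) * (j + 1)) := by
    rw [RS_abel n, RS_abel w, Finset.sum_Ico_eq_sub _ (by omega)]
    have b1 : cnt Nat.Prime n / (n + 1 : ℝ) ≤ 1 := by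
      rw [div_le_one (by positivity)]; linarith [cnt_le Nat.Prime n]
    have b2 : 0 ≤ cnt Nat.Prime w / (w + 1 : ℝ) := div_nonneg (cnt_nonneg _ _) (by positivity)
    linarith
  have a4 : ∑ j ∈ Finset.Ico (w+1) (n+1), cnt Nat.Prime j / ((j : ℝ) * (j + 1)) ≤
      ∑ j ∈ Finset.Ico (w+1) (n+1), (2 / Real.log w) * ((j + 1 : ℝ)⁻¹) := by
    apply Finset.sum_le_sum
    intro j hj
    rw [Finset.mem_Ico] at hj
    have hj1 : (0:ℝ) < j := by exact_mod_cast (by omega : 0 < j)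
    have hlj : Real.log w ≤ Real.log j := Real.log_le_log (by positivity) (by exact_mod_cast (by omega : w ≤ j))
    have h2 := hn0 j (by omega)
    rw [div_lt_iff₀ hj1] at h2
    have h3 : cnt Nat.Prime j * Real.log w ≤ 2 * j :=
      le_trans (mul_le_mul_of_nonneg_left hlj (cnt_nonneg _ _)) h2.le
    rw [← div_div, div_eq_mul_inv]
    apply mul_le_mul_of_nonneg_right _ (by positivity)
    rw [div_le_div_iff₀ hj1 hlw]; exact h3
  have a5 : ∑ j ∈ Finset.Ico (w+1) (n+1), ((j + 1 : ℝ)⁻¹) ≤ 1 + Real.log (n+1) := by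
    have h4 := harmonic_le_one_add_log (n+1)
    push_cast at h4
    refine le_trans ?_ h4
    rw [harmonic]
    push_cast
    apply Finset.sum_le_sum_of_subset_of_nonneg
    · intro j hj; rw [Finset.mem_Ico] at hj; rw [Finset.mem_range]; omega
    · intro j _ _; positivity
  rw [← Finset.mul_sum] at a4
  have a6 := mul_le_mul_of_nonneg_left a5 (show 0 ≤ 2 / Real.log w by positivity)
  have a7 : 2 / Real.log w * (1 + Real.log (n+1)) = 2 * (1 + Real.log (n + 1)) / Real.log w := by ring
  linarith

/-- integer root -/
noncomputable def rt (L x : ℕ) : ℕ := ⌊(x : ℝ) ^ ((1:ℝ) / L)⌋₊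

lemma rt_pow (L x : ℕ) (hL : 1 ≤ L) : (rt L x) ^ L ≤ x := by
  have h1 : (rt L x : ℝ) ≤ (x : ℝ) ^ ((1:ℝ) / L) := Nat.floor_le (by positivity)
  have h2 := pow_le_pow_left₀ (by positivity) h1 L
  rw [one_div, Real.rpow_inv_natCast_pow (by positivity) (by omega)] at h2
  exact_mod_cast h2

lemma rt_tendsto (L : ℕ) (hL : 1 ≤ L) : Tendsto (rt L) atTop atTop := by
  apply tendsto_nat_floor_atTop.comp
  exact (tendsto_rpow_atTop (by positivity)).comp tendsto_natCast_atTop_atTop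

lemma rt_log (L : ℕ) (hL : 1 ≤ L) : ∀ᶠ x : ℕ in atTop, Real.log x ≤ 2 * L * Real.log (rt L x) := by
  filter_upwards [(rt_tendsto L hL).eventually_ge_atTop 2, eventually_ge_atTop 1] with x hx hx1
  have h1 : (x : ℝ) ^ ((1:ℝ) / L) < rt L x + 1 := Nat.lt_floor_add_one _
  have h2 : (rt L x : ℝ) + 1 ≤ (rt L x : ℝ) ^ 2 := by
    have : (2:ℝ) ≤ rt L x := by exact_mod_cast hx
    nlinarith
  have hx0 : (0:ℝ) < x := by exact_mod_cast hx1
  have h3 := Real.log_le_log (by positivity) (h1.le.trans h2)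
  rw [Real.log_rpow hx0, Real.log_pow] at h3
  have hL' : (0:ℝ) < L := by exact_mod_cast hL
  rw [one_div, inv_mul_le_iff₀ hL'] at h3
  push_cast at h3
  linarith

lemma rt_le (L x : ℕ) (hL : 1 ≤ L) : rt L x ≤ x :=
  le_trans (Nat.le_self_pow (by omega) _) (rt_pow L x hL)

lemma RS_bdd (L : ℕ) (hL : 1 ≤ L) : ∃ C : ℝ, ∀ᶠ x : ℕ in atTop,
    RS Nat.Prime (x+1) - RS Nat.Prime (rt L x) ≤ C := by
  obtain ⟨n0, hn0⟩ := RS_diff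
  refine ⟨2 + 2 * (3 + 2 * L) + 2 * (2 * L), ?_⟩
  filter_upwards [(rt_tendsto L hL).eventually_ge_atTop n0, rt_log L hL, (rt_tendsto L hL).eventually_ge_atTop 3,
    eventually_ge_atTop 2] with x h1 h2 h3 h4
  have h5 := hn0 (rt L x) (x+1) h1 ((rt_le L x hL).trans (Nat.le_succ x))
  refine h5.trans ?_
  have hlw : 1 ≤ Real.log (rt L x) := by
    rw [Real.le_log_iff_exp_le (by positivity)]
    have : (3:ℝ) ≤ rt L x := by exact_mod_cast h3
    linarith [Real.exp_one_lt_d9]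
  have hx2 : (2:ℝ) ≤ x := by exact_mod_cast h4
  have h6 : Real.log ((x+1 : ℕ) + 1) ≤ 2 * Real.log x := by
    rw [show 2 * Real.log x = Real.log ((x:ℝ)^2) by rw [Real.log_pow]; norm_num]
    apply Real.log_le_log (by positivity)
    push_cast
    nlinarith
  have hL' : (0:ℝ) < L := by exact_mod_cast hL
  have h7 : 2 * (1 + Real.log ((x+1 : ℕ) + 1)) / Real.log (rt L x) ≤ 2 * (3 + 2 * L) + 2 * (2 * L) := by
    rw [div_le_iff₀ (by linarith)]
    nlinarith
  linarith

lemma EE_nonneg (P : ℕ → ℕ → Prop) (k n : ℕ) : 0 ≤ EE P k n := by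
  induction k generalizing n with
  | zero => simp [EE]
  | succ k ih => exact Finset.sum_nonneg fun j _ => mul_nonneg (wt_nonneg _ _) (ih j)

lemma EE_mono (P : ℕ → ℕ → Prop) (k : ℕ) : Monotone (EE P k) := by
  cases k with
  | zero => intro a b _; simp [EE]
  | succ k =>
    intro a b h
    exact Finset.sum_le_sum_of_subset_of_nonneg (Finset.range_mono h)
      fun i _ _ => mul_nonneg (wt_nonneg _ _) (EE_nonneg _ _ _)

lemma EE_diff (P : ℕ → ℕ → Prop) (hP : ∀ i p, P i p → p.Prime) (k w n : ℕ) (h : w ≤ n) :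
    EE P (k+1) n - EE P (k+1) w ≤ EE P k n * (RS Nat.Prime n - RS Nat.Prime w) := by
  simp only [EE, RS]
  rw [← Finset.sum_Ico_eq_sub _ h, ← Finset.sum_Ico_eq_sub _ h, Finset.mul_sum]
  apply Finset.sum_le_sum
  intro j hj
  rw [Finset.mem_Ico] at hj
  rw [mul_comm]
  apply mul_le_mul (EE_mono P k hj.2.le) _ (wt_nonneg _ _) (EE_nonneg _ _ _)
  unfold wt
  by_cases hh : P k j
  · simp [hh, hP k j hh]
  · rw [if_neg hh]; split_ifs <;> positivity

theorem EE_root (P : ℕ → ℕ → Prop) (hP : ∀ i p, P i p → p.Prime) (c : ℕ → ℝ) (hc : ∀ i, 0 < c i)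
    (h : ∀ i, Tendsto (fun t : ℝ => cnt (P i) t * Real.log t / t) atTop (𝓝 (c i))) (k L : ℕ) (hL : 1 ≤ L) :
    Tendsto (fun x : ℕ => (EE P k (x+1) - EE P k (rt L x)) / EE P k (x+1)) atTop (𝓝 0) := by
  cases k with
  | zero => simp [EE]
  | succ k =>
    obtain ⟨C, hC⟩ := RS_bdd L hL
    have hTT := RS_prime_tendsto
    have e0 := EE_equiv P hP c hc h k
    have e1 := EE_equiv P hP c hc h (k+1)
    have hpk : ∀ k, 0 < ∏ i ∈ Finset.range k, c i := fun k => Finset.prod_pos fun i _ => hc i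
    have e2 := e0.div e1
    have hq : Tendsto (fun n => EE P k n / EE P (k+1) n) atTop (𝓝 0) := by
      refine e2.symm.tendsto_nhds ?_
      have h3 : Tendsto (fun n => ((k+1 : ℝ) / c k) / RS Nat.Prime n) atTop (𝓝 0) :=
        tendsto_const_nhds.div_atTop hTT
      refine h3.congr' ?_
      filter_upwards [hTT.eventually_gt_atTop 0] with n hn
      have := hpk k
      have := hc k
      simp only [Pi.div_apply, Finset.prod_range_succ, Nat.factorial_succ]
      push_cast
      field_simp
      ring
    have hq1 := (hq.comp (tendsto_add_atTop_nat 1)).mul_const (max C 0)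
    rw [zero_mul] at hq1
    refine squeeze_zero' ?_ ?_ hq1
    · refine Eventually.of_forall fun x => div_nonneg ?_ (EE_nonneg _ _ _)
      rw [sub_nonneg]
      exact EE_mono _ _ ((rt_le L x hL).trans (Nat.le_succ x))
    · filter_upwards [hC] with x hx
      simp only [Function.comp]
      rw [div_mul_eq_mul_div]
      apply div_le_div_of_nonneg_right _ (EE_nonneg _ _ _)
      refine (EE_diff P hP k _ _ ((rt_le L x hL).trans (Nat.le_succ x))).trans ?_
      exact mul_le_mul_of_nonneg_left (hx.trans (le_max_left _ _)) (EE_nonneg _ _ _)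

end WI

namespace WI

open MeasureTheory Topology

/-- products of `k` primes `p_0 < ... < p_{k-1} < y` with pattern `P` -/
noncomputable def AA (P : ℕ → ℕ → Prop) : ℕ → ℕ → Finset ℕ
  | 0, _ => {1}
  | k + 1, y => ((Finset.range y).filter (P k)).biUnion fun q => (AA P k q).image (fun m => m * q)

lemma mem_AA_succ (P : ℕ → ℕ → Prop) (k y n : ℕ) :
    n ∈ AA P (k+1) y ↔ ∃ q, q < y ∧ P k q ∧ ∃ m ∈ AA P k q, m * q = n := by
  simp [AA, and_assoc]

lemma AA_mono (P : ℕ → ℕ → Prop) (k : ℕ) {y y' : ℕ} (h : y ≤ y') : AA P k y ⊆ AA P k y' := by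
  cases k with
  | zero => simp [AA]
  | succ k =>
    intro n hn
    rw [mem_AA_succ] at hn ⊢
    obtain ⟨q, hq, h2⟩ := hn
    exact ⟨q, hq.trans_le h, h2⟩

lemma AA_facts (P : ℕ → ℕ → Prop) (hP : ∀ i p, P i p → p.Prime) (k : ℕ) : ∀ y n, n ∈ AA P k y →
    0 < n ∧ n ≤ y ^ k ∧ ∀ p, p.Prime → p ∣ n → p < y := by
  induction k with
  | zero =>
    intro y n hn
    simp only [AA, Finset.mem_singleton] at hn
    subst hn
    refine ⟨one_pos, by simp, fun p hp h => ?_⟩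
    exact absurd (Nat.dvd_one.1 h) hp.ne_one
  | succ k ih =>
    intro y n hn
    rw [mem_AA_succ] at hn
    obtain ⟨q, hq, hPq, m, hm, rfl⟩ := hn
    obtain ⟨h1, h2, h3⟩ := ih q m hm
    have hqp := hP k q hPq
    refine ⟨Nat.mul_pos h1 hqp.pos, ?_, ?_⟩
    · calc m * q ≤ q ^ k * q := Nat.mul_le_mul_right _ h2
        _ = q ^ (k+1) := by ring
        _ ≤ y ^ (k+1) := Nat.pow_le_pow_left hq.le _
    · intro p hp hd
      rcases hp.dvd_mul.1 hd with h | h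
      · exact (h3 p hp h).trans hq
      · rw [(Nat.prime_dvd_prime_iff_eq hp hqp).1 h]; exact hq

lemma AA_inj (P : ℕ → ℕ → Prop) (hP : ∀ i p, P i p → p.Prime) (k q q' m m' : ℕ) (hq : q.Prime) (hq' : q'.Prime)
    (hm : m ∈ AA P k q) (hm' : m' ∈ AA P k q') (h : m * q = m' * q') : q = q' := by
  have key : ∀ q q' m m' : ℕ, q.Prime → q'.Prime → m ∈ AA P k q → m * q = m' * q' → q' ≤ q := by
    intro q q' m m' hq hq' hm h
    have hd : q' ∣ m * q := by rw [h]; exact dvd_mul_left _ _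
    rcases hq'.dvd_mul.1 hd with h1 | h1
    · exact ((AA_facts P hP k q m hm).2.2 q' hq' h1).le
    · exact ((Nat.prime_dvd_prime_iff_eq hq' hq).1 h1).le
  exact le_antisymm (key q' q m' m hq' hq hm' h.symm) (key q q' m m' hq hq' hm h)

lemma AA_sum (P : ℕ → ℕ → Prop) (hP : ∀ i p, P i p → p.Prime) (k y : ℕ) (f : ℕ → ℝ) :
    ∑ n ∈ AA P (k+1) y, f n = ∑ q ∈ (Finset.range y).filter (P k), ∑ m ∈ AA P k q, f (m * q) := by
  rw [AA, Finset.sum_biUnion]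
  · apply Finset.sum_congr rfl
    intro q hq
    rw [Finset.sum_image]
    intro a _ b _ hab
    rw [Finset.mem_filter] at hq
    exact Nat.eq_of_mul_eq_mul_right (hP k q hq.2).pos hab
  · intro q hq q' hq' hne
    simp only [Finset.coe_filter, Set.mem_ofPred_eq] at hq hq'
    simp only [Function.onFun]
    rw [Finset.disjoint_left]
    intro n hn hn'
    rw [Finset.mem_image] at hn hn'
    obtain ⟨m, hm, rfl⟩ := hn
    obtain ⟨m', hm', h⟩ := hn'
    exact hne (AA_inj P hP k q q' m m' (hP k q hq.2) (hP k q' hq'.2) hm hm' h.symm)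

lemma AA_EE (P : ℕ → ℕ → Prop) (hP : ∀ i p, P i p → p.Prime) (k : ℕ) : ∀ y,
    ∑ m ∈ AA P k y, (1 / (m : ℝ)) = EE P k y := by
  induction k with
  | zero => intro y; simp [AA, EE]
  | succ k ih =>
    intro y
    rw [AA_sum P hP, EE, Finset.sum_filter]
    apply Finset.sum_congr rfl
    intro q _
    unfold wt
    split_ifs
    · rw [← ih, Finset.mul_sum]
      apply Finset.sum_congr rfl
      intro m _
      push_cast
      rw [one_div_mul_one_div, mul_comm]
    · simp

/-- counting function -/
noncomputable def NN (P : ℕ → ℕ → Prop) (k x : ℕ) : ℝ := (((AA P k (x+1)).filter (fun n => n ≤ x)).card : ℝ)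

/-- inner fibre -/
noncomputable def fib (P : ℕ → ℕ → Prop) (k x m : ℕ) : Finset ℕ :=
  (Finset.range (x+1)).filter (fun q => P k q ∧ m ∈ AA P k q ∧ m * q ≤ x)

lemma NN_eq (P : ℕ → ℕ → Prop) (hP : ∀ i p, P i p → p.Prime) (k x : ℕ) :
    NN P (k+1) x = ∑ m ∈ AA P k (x+1), ((fib P k x m).card : ℝ) := by
  unfold NN
  rw [Finset.card_filter]
  push_cast
  rw [AA_sum P hP]
  have h1 : ∀ q ∈ (Finset.range (x+1)).filter (P k),
      ∑ m ∈ AA P k q, (if m * q ≤ x then (1:ℝ) else 0) = ∑ m ∈ AA P k (x+1), if m ∈ AA P k q ∧ m * q ≤ x then (1:ℝ) else 0 := by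
    intro q hq
    rw [Finset.mem_filter, Finset.mem_range] at hq
    have hsub : AA P k q ⊆ AA P k (x+1) := AA_mono P k hq.1.le
    rw [← Finset.inter_eq_right.2 hsub, ← Finset.filter_mem_eq_inter, Finset.sum_filter]
    apply Finset.sum_congr rfl
    intro m hm'
    by_cases h : m ∈ AA P k q <;> simp [h, hm']
  rw [Finset.sum_congr rfl h1, Finset.sum_comm]
  apply Finset.sum_congr rfl
  intro m _
  unfold fib
  rw [Finset.sum_filter, Finset.card_filter]
  push_cast
  apply Finset.sum_congr rfl
  intro q _
  by_cases h : P k q <;> simp [h]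

lemma fib_le (P : ℕ → ℕ → Prop) (hP : ∀ i p, P i p → p.Prime) (k x m : ℕ) (hm : 0 < m) :
    ((fib P k x m).card : ℝ) ≤ cnt (P k) ((x : ℝ) / m) := by
  unfold cnt fib
  norm_cast
  apply Finset.card_le_card
  intro q hq
  simp only [Finset.mem_filter, Finset.mem_Icc, Finset.mem_range] at hq ⊢
  refine ⟨⟨(hP k q hq.2.1).pos, ?_⟩, hq.2.1⟩
  rw [Nat.floor_div_natCast, Nat.floor_natCast, Nat.le_div_iff_mul_le hm, mul_comm]
  exact hq.2.2.2

lemma fib_ge (P : ℕ → ℕ → Prop) (k x m w : ℕ) (hm : 0 < m) (hmw : m ∈ AA P k w) :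
    cnt (P k) ((x : ℝ) / m) - w ≤ ((fib P k x m).card : ℝ) := by
  unfold cnt fib
  rw [sub_le_iff_le_add]
  norm_cast
  rw [Nat.floor_div_natCast, Nat.floor_natCast]
  calc _ ≤ ((Finset.range (x+1)).filter (fun q => P k q ∧ m ∈ AA P k q ∧ m * q ≤ x) ∪ Finset.range w).card := by
        apply Finset.card_le_card
        intro q hq
        simp only [Finset.mem_filter, Finset.mem_Icc, Finset.mem_range, Finset.mem_union] at hq ⊢
        by_cases h : q < w
        · right; exact h
        · left
          push Not at h
          have h2 := (Nat.le_div_iff_mul_le hm).1 hq.1.2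
          refine ⟨?_, hq.2, AA_mono P k h hmw, by rw [mul_comm]; exact h2⟩
          have : q ≤ q * m := Nat.le_mul_of_pos_right _ hm
          omega
    _ ≤ _ := by
        refine (Finset.card_union_le _ _).trans ?_
        rw [Finset.card_range]

lemma fib_zero (P : ℕ → ℕ → Prop) (k x m w : ℕ) (hm : 0 < m) (hmw : m ∉ AA P k w) (hne : (fib P k x m).card ≠ 0) :
    (w : ℝ) ≤ (x : ℝ) / m := by
  rw [Finset.card_ne_zero] at hne
  obtain ⟨q, hq⟩ := hne
  simp only [fib, Finset.mem_filter, Finset.mem_range] at hq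
  have : w < q := by
    by_contra h
    push Not at h
    exact hmw (AA_mono P k h hq.2.2.1)
  rw [le_div_iff₀ (by exact_mod_cast hm)]
  have h2 : w * m ≤ x := by
    calc w * m ≤ q * m := Nat.mul_le_mul_right _ this.le
      _ = m * q := mul_comm _ _
      _ ≤ x := hq.2.2.2
  exact_mod_cast h2

end WI

namespace WI

open MeasureTheory Topology

/-- basic facts on an element of `AA P k w`, `w` a root of `x` -/
lemma root_facts (P : ℕ → ℕ → Prop) (hP : ∀ i p, P i p → p.Prime) (k M x m : ℕ) (hM : 2 ≤ M)
    (hx : 2 ≤ rt ((k+1)*M) x) (hm : m ∈ AA P k (rt ((k+1)*M) x)) :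
    (rt ((k+1)*M) x : ℝ) ≤ (x : ℝ) / m ∧ (1 - 1 / (M:ℝ)) * Real.log x ≤ Real.log ((x:ℝ)/m) ∧
      Real.log ((x:ℝ)/m) ≤ Real.log x := by
  set w := rt ((k+1)*M) x with hw
  have hL : 1 ≤ (k+1)*M := by nlinarith
  have hp : w ^ ((k+1)*M) ≤ x := rt_pow _ _ hL
  obtain ⟨h1, h2, -⟩ := AA_facts P hP k w m hm
  have hm0 : (0:ℝ) < m := by exact_mod_cast h1
  have hm1 : (1:ℝ) ≤ m := by exact_mod_cast h1
  have hxpos : 0 < x := lt_of_lt_of_le (by positivity) hp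
  have hx0 : (0:ℝ) < x := by exact_mod_cast hxpos
  have h3 : w * m ≤ x := by
    calc w * m ≤ w * w ^ k := Nat.mul_le_mul_left _ h2
      _ = w ^ (k+1) := by ring
      _ ≤ w ^ ((k+1)*M) := Nat.pow_le_pow_right (by omega) (by nlinarith)
      _ ≤ x := hp
  have h4 : m ^ M ≤ x := by
    calc m ^ M ≤ (w ^ k) ^ M := Nat.pow_le_pow_left h2 _
      _ = w ^ (k * M) := by rw [pow_mul]
      _ ≤ w ^ ((k+1)*M) := Nat.pow_le_pow_right (by omega) (by nlinarith)
      _ ≤ x := hp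
  have h5 : M * Real.log m ≤ Real.log x := by
    rw [← Real.log_pow]
    apply Real.log_le_log (by positivity)
    exact_mod_cast h4
  have hM0 : (0:ℝ) < M := by exact_mod_cast (by omega : 0 < M)
  have h6 : Real.log m ≤ 1 / (M:ℝ) * Real.log x := by
    rw [one_div, le_inv_mul_iff₀ hM0]; exact h5
  have h7 : 0 ≤ Real.log m := Real.log_nonneg hm1
  refine ⟨?_, ?_, ?_⟩
  · rw [le_div_iff₀ hm0]; exact_mod_cast h3
  · rw [Real.log_div hx0.ne' hm0.ne']; linarith
  · rw [Real.log_div hx0.ne' hm0.ne']; linarith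

lemma NN_upper (P : ℕ → ℕ → Prop) (hP : ∀ i p, P i p → p.Prime) (k M : ℕ) (hM : 2 ≤ M) (B : ℝ)
    (hB : ∀ᶠ t : ℝ in atTop, cnt (P k) t * Real.log t / t < B) :
    ∀ᶠ x : ℕ in atTop, NN P (k+1) x ≤ x / Real.log x * (B / (1 - 1 / (M:ℝ)) * EE P k (x+1) +
      B * (2 * ((k+1)*M : ℕ)) * (EE P k (x+1) - EE P k (rt ((k+1)*M) x))) := by
  obtain ⟨t0, ht0⟩ := eventually_atTop.1 hB
  have hL : 1 ≤ (k+1)*M := by nlinarith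
  obtain ⟨n0, hn0⟩ := exists_nat_ge t0
  have hB0 : 0 < B := by
    have := ht0 (max t0 2) (le_max_left _ _)
    refine lt_of_le_of_lt ?_ this
    have h2 : (2:ℝ) ≤ max t0 2 := le_max_right _ _
    exact div_nonneg (mul_nonneg (cnt_nonneg _ _) (Real.log_nonneg (by linarith))) (by linarith)
  filter_upwards [(rt_tendsto _ hL).eventually_ge_atTop n0, (rt_tendsto _ hL).eventually_ge_atTop 2, rt_log _ hL,
    eventually_ge_atTop 2] with x h1 h2 h3 h4
  set w := rt ((k+1)*M) x with hw
  have hw1 : t0 ≤ w := hn0.trans (by exact_mod_cast h1)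
  have hw2 : (2:ℝ) ≤ w := by exact_mod_cast h2
  have hx2 : (2:ℝ) ≤ x := by exact_mod_cast h4
  have hlx : 0 < Real.log x := Real.log_pos (by linarith)
  have hlw : 0 < Real.log w := Real.log_pos (by linarith)
  have hM0 : (2:ℝ) ≤ M := by exact_mod_cast hM
  have hM1 : 0 < 1 - 1 / (M:ℝ) := by
    have : 1 / (M:ℝ) ≤ 1 / 2 := one_div_le_one_div_of_le (by norm_num) hM0
    linarith
  have hLr : (0:ℝ) < ((k+1)*M : ℕ) := by exact_mod_cast hL
  -- the general bound
  have hcnt : ∀ t : ℝ, (w:ℝ) ≤ t → ∀ u : ℝ, 0 < u → u ≤ Real.log t → cnt (P k) t ≤ B * t / u := by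
    intro t ht u hu hut
    have h5 := ht0 t (hw1.trans ht)
    have ht0' : 0 < t := by linarith
    rw [div_lt_iff₀ ht0'] at h5
    rw [le_div_iff₀ hu]
    exact (mul_le_mul_of_nonneg_left hut (cnt_nonneg _ _)).trans h5.le
  have hsub : AA P k w ⊆ AA P k (x+1) := AA_mono P k ((rt_le _ x hL).trans (Nat.le_succ x))
  rw [NN_eq P hP, ← Finset.sum_sdiff hsub]
  have g1 : ∑ m ∈ AA P k w, ((fib P k x m).card : ℝ) ≤ x / Real.log x * (B / (1 - 1 / (M:ℝ))) * EE P k w := by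
    rw [← AA_EE P hP, Finset.mul_sum]
    apply Finset.sum_le_sum
    intro m hm
    obtain ⟨r1, r2, r3⟩ := root_facts P hP k M x m hM h2 hm
    have hm0 := (AA_facts P hP k w m hm).1
    have hm0' : (0:ℝ) < m := by exact_mod_cast hm0
    refine (fib_le P hP k x m hm0).trans ((hcnt _ r1 _ (by positivity) r2).trans (le_of_eq ?_))
    field_simp
  have g2 : ∑ m ∈ AA P k (x+1) \ AA P k w, ((fib P k x m).card : ℝ) ≤
      x / Real.log x * (B * (2 * ((k+1)*M : ℕ))) * (EE P k (x+1) - EE P k w) := by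
    rw [← AA_EE P hP, ← AA_EE P hP, ← Finset.sum_sdiff hsub, add_sub_cancel_right, Finset.mul_sum]
    apply Finset.sum_le_sum
    intro m hm
    rw [Finset.mem_sdiff] at hm
    have hm0 := (AA_facts P hP k (x+1) m hm.1).1
    have hm0' : (0:ℝ) < m := by exact_mod_cast hm0
    by_cases hz : (fib P k x m).card = 0
    · rw [hz]; push_cast; positivity
    · have r1 := fib_zero P k x m w hm0 hm.2 hz
      have r2 : Real.log x / (2 * ((k+1)*M : ℕ)) ≤ Real.log ((x:ℝ)/m) := by
        have : Real.log w ≤ Real.log ((x:ℝ)/m) := Real.log_le_log (by linarith) r1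
        refine le_trans ?_ this
        rw [div_le_iff₀ (by positivity)]; linarith
      refine (fib_le P hP k x m hm0).trans ((hcnt _ r1 _ (by positivity) r2).trans (le_of_eq ?_))
      field_simp
  have g3 : x / Real.log x * (B / (1 - 1 / (M:ℝ))) * EE P k w ≤ x / Real.log x * (B / (1 - 1 / (M:ℝ))) * EE P k (x+1) :=
    mul_le_mul_of_nonneg_left (EE_mono P k ((rt_le _ x hL).trans (Nat.le_succ x))) (by positivity)
  have g4 := add_le_add g2 (g1.trans g3)
  refine g4.trans (le_of_eq ?_)
  ring

lemma NN_lower (P : ℕ → ℕ → Prop) (hP : ∀ i p, P i p → p.Prime) (k M : ℕ) (hM : 2 ≤ M) (b : ℝ) (hb0 : 0 ≤ b)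
    (hb : ∀ᶠ t : ℝ in atTop, b < cnt (P k) t * Real.log t / t) :
    ∀ᶠ x : ℕ in atTop, x / Real.log x * (b * EE P k (rt ((k+1)*M) x)) - √x ≤ NN P (k+1) x := by
  obtain ⟨t0, ht0⟩ := eventually_atTop.1 hb
  have hL : 1 ≤ (k+1)*M := by nlinarith
  obtain ⟨n0, hn0⟩ := exists_nat_ge t0
  filter_upwards [(rt_tendsto _ hL).eventually_ge_atTop n0, (rt_tendsto _ hL).eventually_ge_atTop 2,
    eventually_ge_atTop 2] with x h1 h2 h4
  have hpw : (rt ((k+1)*M) x) ^ ((k+1)*M) ≤ x := rt_pow _ _ hL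
  set w := rt ((k+1)*M) x with hw
  have hw1 : t0 ≤ w := hn0.trans (by exact_mod_cast h1)
  have hw2 : (2:ℝ) ≤ w := by exact_mod_cast h2
  have hx2 : (2:ℝ) ≤ x := by exact_mod_cast h4
  have hlx : 0 < Real.log x := Real.log_pos (by linarith)
  have hsub : AA P k w ⊆ AA P k (x+1) := AA_mono P k ((rt_le _ x hL).trans (Nat.le_succ x))
  have hcard : ((AA P k w).card : ℝ) * w ≤ √x := by
    apply Real.le_sqrt_of_sq_le
    have c1 : (AA P k w).card ≤ w ^ k := by
      have : AA P k w ⊆ Finset.Icc 1 (w ^ k) := by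
        intro m hm
        obtain ⟨a1, a2, -⟩ := AA_facts P hP k w m hm
        rw [Finset.mem_Icc]; exact ⟨a1, a2⟩
      simpa using Finset.card_le_card this
    have c2 : ((AA P k w).card * w) ^ 2 ≤ x := by
      calc ((AA P k w).card * w) ^ 2 ≤ (w ^ k * w) ^ 2 := Nat.pow_le_pow_left (Nat.mul_le_mul_right _ c1) _
        _ = w ^ ((k+1)*2) := by rw [← pow_succ, ← pow_mul]
        _ ≤ w ^ ((k+1)*M) := Nat.pow_le_pow_right (by omega) (Nat.mul_le_mul_left _ hM)
        _ ≤ x := hpw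
    exact_mod_cast c2
  rw [NN_eq P hP]
  have g1 : ∑ m ∈ AA P k w, (x / Real.log x * b * (1 / (m:ℝ)) - w) ≤ ∑ m ∈ AA P k w, ((fib P k x m).card : ℝ) := by
    apply Finset.sum_le_sum
    intro m hm
    obtain ⟨r1, r2, r3⟩ := root_facts P hP k M x m hM h2 hm
    have hm0 := (AA_facts P hP k w m hm).1
    have hm0' : (0:ℝ) < m := by exact_mod_cast hm0
    refine le_trans ?_ (fib_ge P k x m w hm0 hm)
    apply sub_le_sub_right
    have ht : (0:ℝ) < (x:ℝ)/m := by positivity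
    have h5 := ht0 ((x:ℝ)/m) (hw1.trans r1)
    rw [lt_div_iff₀ ht] at h5
    have h6 : b * ((x:ℝ)/m) ≤ cnt (P k) ((x:ℝ)/m) * Real.log x :=
      h5.le.trans (mul_le_mul_of_nonneg_left r3 (cnt_nonneg _ _))
    rw [← div_le_iff₀ hlx] at h6
    refine le_trans (le_of_eq ?_) h6
    field_simp
  have g2 : ∑ m ∈ AA P k w, ((fib P k x m).card : ℝ) ≤ ∑ m ∈ AA P k (x+1), ((fib P k x m).card : ℝ) :=
    Finset.sum_le_sum_of_subset_of_nonneg hsub fun _ _ _ => by positivity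
  rw [Finset.sum_sub_distrib, ← Finset.mul_sum, AA_EE P hP, Finset.sum_const, nsmul_eq_mul] at g1
  linarith

theorem NN_lim (P : ℕ → ℕ → Prop) (hP : ∀ i p, P i p → p.Prime) (c : ℕ → ℝ) (hc : ∀ i, 0 < c i)
    (h : ∀ i, Tendsto (fun t : ℝ => cnt (P i) t * Real.log t / t) atTop (𝓝 (c i))) (k : ℕ) :
    Tendsto (fun x : ℕ => NN P (k+1) x / (x / Real.log x * EE P k (x+1))) atTop (𝓝 (c k)) := by
  -- eventual positivity
  have hTT := RS_prime_tendsto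
  have hEpos : ∃ n0, 0 < EE P k n0 := by
    have e0 := EE_equiv P hP c hc h k
    have hv : ∀ᶠ n in atTop, 0 < (∏ i ∈ Finset.range k, c i) * RS Nat.Prime n ^ k / k.factorial := by
      filter_upwards [hTT.eventually_gt_atTop 0] with n hn
      have : 0 < ∏ i ∈ Finset.range k, c i := Finset.prod_pos fun i _ => hc i
      positivity
    have h1 := (isEquivalent_iff_tendsto_one (hv.mono fun n hn => hn.ne')).1 e0
    have h2 := h1.eventually (lt_mem_nhds one_pos)
    obtain ⟨n, hn1, hn2⟩ := (h2.and hv).exists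
    simp only [Pi.div_apply] at hn1
    exact ⟨n, (div_pos_iff_of_pos_right hn2).1 hn1⟩
  obtain ⟨n0, hn0⟩ := hEpos
  have hE : ∀ᶠ x : ℕ in atTop, EE P k n0 ≤ EE P k (x+1) := by
    filter_upwards [eventually_ge_atTop n0] with x hx
    exact EE_mono P k (by omega)
  have hsq : Tendsto (fun x : ℕ => √x / (x / Real.log x * EE P k (x+1))) atTop (𝓝 0) := by
    have h1 : Tendsto (fun x : ℝ => Real.log x / x ^ (1/2:ℝ)) atTop (𝓝 0) :=
      (isLittleO_log_rpow_atTop (by norm_num)).tendsto_div_nhds_zero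
    have h2 := (h1.comp (tendsto_natCast_atTop_atTop (R := ℝ))).div_const (EE P k n0)
    rw [zero_div] at h2
    refine squeeze_zero' ?_ ?_ h2
    · filter_upwards [eventually_ge_atTop 1] with x hx
      have : 0 ≤ Real.log x := Real.log_nonneg (by exact_mod_cast hx)
      exact div_nonneg (by positivity) (mul_nonneg (by positivity) (EE_nonneg _ _ _))
    · filter_upwards [hE, eventually_ge_atTop 2] with x hx hx2
      have hx2' : (2:ℝ) ≤ x := by exact_mod_cast hx2
      have hl : 0 < Real.log x := Real.log_pos (by linarith)
      have hEx : 0 < EE P k (x+1) := hn0.trans_le hx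
      simp only [Function.comp]
      rw [← Real.sqrt_eq_rpow]
      have e1 : √x / (x / Real.log x * EE P k (x+1)) = Real.log x / √x / EE P k (x+1) := by
        have hs : (0:ℝ) < √x := Real.sqrt_pos.2 (by linarith)
        have hs2 : √(x:ℝ) * √x = x := Real.mul_self_sqrt (by linarith)
        field_simp
        nlinarith
      rw [e1]
      exact div_le_div_of_nonneg_left (by positivity) hn0 hx
  rw [tendsto_order]
  constructor
  · intro a ha
    obtain ⟨b, hb1, hb2⟩ := exists_between (max_lt ha (hc k))
    have hb0 : 0 ≤ b := (le_max_right a 0).trans hb1.le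
    have hab : a < b := (le_max_left a 0).trans_lt hb1
    have hr := EE_root P hP c hc h k ((k+1)*2) (by omega)
    have hlow := NN_lower P hP k 2 le_rfl b hb0 ((h k).eventually (lt_mem_nhds hb2))
    have hlim : Tendsto (fun x : ℕ => b * (1 - (EE P k (x+1) - EE P k (rt ((k+1)*2) x)) / EE P k (x+1))
        - √x / (x / Real.log x * EE P k (x+1))) atTop (𝓝 (b * (1 - 0) - 0)) :=
      ((hr.const_sub 1).const_mul b).sub hsq
    rw [sub_zero, sub_zero, mul_one] at hlim
    filter_upwards [hlim.eventually (lt_mem_nhds hab), hlow, hE, eventually_ge_atTop 2] with x h1 h2 h3 h4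
    refine h1.trans_le ?_
    have hx2 : (2:ℝ) ≤ x := by exact_mod_cast h4
    have hl : 0 < Real.log x := Real.log_pos (by linarith)
    have hEx : 0 < EE P k (x+1) := hn0.trans_le h3
    have hD : 0 < x / Real.log x * EE P k (x+1) := by positivity
    rw [le_div_iff₀ hD]
    refine le_trans (le_of_eq ?_) h2
    field_simp
    ring
  · intro a ha
    obtain ⟨B, hB1, hB2⟩ := exists_between ha
    have hM : Tendsto (fun M : ℕ => B / (1 - 1 / (M:ℝ))) atTop (𝓝 (B / (1 - 0))) :=
      tendsto_const_nhds.div (tendsto_const_nhds.sub tendsto_one_div_atTop_nhds_zero_nat) (by norm_num)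
    rw [sub_zero, div_one] at hM
    obtain ⟨M, hMa, hM2⟩ := ((hM.eventually (gt_mem_nhds hB2)).and (eventually_ge_atTop 2)).exists
    have hr := EE_root P hP c hc h k ((k+1)*M) (by nlinarith)
    have hup := NN_upper P hP k M hM2 B ((h k).eventually (gt_mem_nhds hB1))
    have hlim := (hr.const_mul (B * (2 * ((k+1)*M : ℕ)))).const_add (B / (1 - 1 / (M:ℝ)))
    rw [mul_zero, add_zero] at hlim
    filter_upwards [hlim.eventually (gt_mem_nhds hMa), hup, hE, eventually_ge_atTop 2] with x h1 h2 h3 h4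
    refine lt_of_le_of_lt ?_ h1
    have hx2 : (2:ℝ) ≤ x := by exact_mod_cast h4
    have hl : 0 < Real.log x := Real.log_pos (by linarith)
    have hEx : 0 < EE P k (x+1) := hn0.trans_le h3
    have hD : 0 < x / Real.log x * EE P k (x+1) := by positivity
    rw [div_le_iff₀ hD]
    refine h2.trans (le_of_eq ?_)
    generalize B / (1 - 1 / (M:ℝ)) = B'
    field_simp

end WI

namespace WI

open MeasureTheory Topology

theorem NN_equiv (P : ℕ → ℕ → Prop) (hP : ∀ i p, P i p → p.Prime) (c : ℕ → ℝ) (hc : ∀ i, 0 < c i)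
    (h : ∀ i, Tendsto (fun t : ℝ => cnt (P i) t * Real.log t / t) atTop (𝓝 (c i))) (k : ℕ) :
    (fun x : ℕ => NN P (k+1) x) ~[atTop] (fun x : ℕ => (∏ i ∈ Finset.range (k+1), c i) *
      (x / Real.log x * (RS Nat.Prime (x+1) ^ k / k.factorial))) := by
  have h1 := NN_lim P hP c hc h k
  have hck := hc k
  have hpk : 0 < ∏ i ∈ Finset.range k, c i := Finset.prod_pos fun i _ => hc i
  have hE : ∀ᶠ x : ℕ in atTop, x / Real.log x * EE P k (x+1) ≠ 0 := by
    have h2 := h1.eventually (lt_mem_nhds hck)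
    filter_upwards [h2] with x hx h0
    rw [h0, div_zero] at hx
    exact lt_irrefl _ hx
  have h3 : (fun x : ℕ => NN P (k+1) x) ~[atTop] (fun x : ℕ => c k * (x / Real.log x * EE P k (x+1))) := by
    rw [isEquivalent_iff_tendsto_one]
    · have := h1.div_const (c k)
      rw [div_self hck.ne'] at this
      refine this.congr fun x => ?_
      simp only [Pi.div_apply]
      rw [div_div, mul_comm (c k)]
    · filter_upwards [hE] with x hx
      exact mul_ne_zero hck.ne' hx
  have h4 := (EE_equiv P hP c hc h k).comp_tendsto (tendsto_add_atTop_nat 1)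
  have h5 := (IsEquivalent.refl (u := fun x : ℕ => c k * (x / Real.log x))).mul h4
  refine (h3.congr_right (Eventually.of_forall fun x => ?_)).trans
    (h5.congr_right (Eventually.of_forall fun x => ?_))
  · simp only [Pi.mul_apply, Function.comp]; ring
  · simp only [Pi.mul_apply, Function.comp, Finset.prod_range_succ]; ring

lemma mem_AA (P : ℕ → ℕ → Prop) (k : ℕ) : ∀ y n, n ∈ AA P k y ↔
    ∃ p : Fin k → ℕ, StrictMono p ∧ (∀ i : Fin k, P i (p i)) ∧ (∀ i, p i < y) ∧ n = ∏ i, p i := by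
  induction k with
  | zero =>
    intro y n
    simp only [AA, Finset.mem_singleton]
    constructor
    · rintro rfl
      exact ⟨Fin.elim0, fun i => i.elim0, fun i => i.elim0, fun i => i.elim0, by simp⟩
    · rintro ⟨p, -, -, -, h⟩
      simpa using h
  | succ k ih =>
    intro y n
    rw [mem_AA_succ]
    constructor
    · rintro ⟨q, hq, hPq, m, hm, rfl⟩
      obtain ⟨p, h1, h2, h3, rfl⟩ := (ih q m).1 hm
      refine ⟨Fin.snoc p q, ?_, ?_, ?_, ?_⟩
      · intro i j hij
        induction j using Fin.lastCases with
        | last =>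
          induction i using Fin.lastCases with
          | last => exact absurd hij (lt_irrefl _)
          | cast i => simp only [Fin.snoc_castSucc, Fin.snoc_last]; exact h3 i
        | cast j =>
          induction i using Fin.lastCases with
          | last => exact absurd (hij.trans (Fin.castSucc_lt_last j)) (lt_irrefl _)
          | cast i => simp only [Fin.snoc_castSucc]; exact h1 (by simpa using hij)
      · intro i
        induction i using Fin.lastCases with
        | last => simpa using hPq
        | cast i => simpa using h2 i
      · intro i
        induction i using Fin.lastCases with
        | last => simpa using hq
        | cast i => simpa using (h3 i).trans hq
      · rw [Fin.prod_univ_castSucc]; simp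
    · rintro ⟨p, h1, h2, h3, rfl⟩
      refine ⟨p (Fin.last k), h3 _, by simpa using h2 (Fin.last k), ∏ i : Fin k, p i.castSucc, ?_, ?_⟩
      · rw [ih]
        refine ⟨fun i => p i.castSucc, ?_, ?_, ?_, rfl⟩
        · intro i j hij; exact h1 (by simpa using hij)
        · intro i; simpa using h2 i.castSucc
        · intro i; exact h1 (Fin.castSucc_lt_last i)
      · rw [Fin.prod_univ_castSucc]

lemma NN_set (P : ℕ → ℕ → Prop) (hP : ∀ i p, P i p → p.Prime) (k x : ℕ) :
    (AA P k (x+1)).filter (fun n => n ≤ x) = (Finset.range (x+1)).filter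
      (fun n => ∃ p : Fin k → ℕ, StrictMono p ∧ (∀ i : Fin k, P i (p i)) ∧ n = ∏ i, p i) := by
  ext n
  rw [Finset.mem_filter, Finset.mem_filter, mem_AA, Finset.mem_range]
  constructor
  · rintro ⟨⟨p, h1, h2, h3, h4⟩, h5⟩
    exact ⟨by omega, p, h1, h2, h4⟩
  · rintro ⟨h5, p, h1, h2, h4⟩
    refine ⟨⟨p, h1, h2, fun i => ?_, h4⟩, by omega⟩
    have hd : p i ∣ n := by rw [h4]; exact Finset.dvd_prod_of_mem _ (Finset.mem_univ i)
    have hn : 0 < n := by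
      rw [h4]; exact Finset.prod_pos fun i _ => (hP _ _ (h2 i)).pos
    exact lt_of_le_of_lt (Nat.le_of_dvd hn hd) h5

lemma sqf_iff (k n : ℕ) : (Squarefree n ∧ n.primeFactors.card = k) ↔
    ∃ p : Fin k → ℕ, StrictMono p ∧ (∀ i, (p i).Prime) ∧ n = ∏ i, p i := by
  constructor
  · rintro ⟨hs, hc⟩
    refine ⟨n.primeFactors.orderEmbOfFin hc, (n.primeFactors.orderEmbOfFin hc).strictMono, fun i => ?_, ?_⟩
    · exact Nat.prime_of_mem_primeFactors (Finset.orderEmbOfFin_mem _ hc i)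
    · conv_lhs => rw [← Nat.prod_primeFactors_of_squarefree hs]
      have : n.primeFactors = Finset.univ.image (n.primeFactors.orderEmbOfFin hc) := by
        rw [Finset.image_orderEmbOfFin_univ]
      conv_lhs => rw [this]
      rw [Finset.prod_image]
      intro a _ b _ hab
      exact (n.primeFactors.orderEmbOfFin hc).injective hab
  · rintro ⟨p, h1, h2, rfl⟩
    have hprod : ∏ i, p i = ∏ q ∈ Finset.univ.image p, q := by
      rw [Finset.prod_image]
      intro a _ b _ hab
      exact h1.injective hab
    have hpr : ∀ q ∈ Finset.univ.image p, q.Prime := by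
      intro q hq
      rw [Finset.mem_image] at hq
      obtain ⟨i, -, rfl⟩ := hq
      exact h2 i
    constructor
    · apply Finset.squarefree_prod_of_pairwise_isCoprime
      · intro i _ j _ hij
        simp only [Function.onFun]
        rw [← Nat.coprime_iff_isRelPrime]
        exact (Nat.coprime_primes (h2 i) (h2 j)).2 (fun h => hij (h1.injective h))
      · intro i _
        exact (h2 i).prime.irreducible.squarefree
    · rw [hprod, Nat.primeFactors_prod hpr, Finset.card_image_of_injective _ h1.injective]
      simp

theorem main (D : ℤ) (hD : ¬ IsSquare D) (k : ℕ) (hk : 1 ≤ k)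
    (ε : Fin k → ℤ) (hε : ∀ i, ε i = 1 ∨ ε i = -1) :
    IsEquivalent atTop
      (fun x : ℕ => (((Finset.range (x + 1)).filter
          (fun n => ∃ p : Fin k → ℕ, StrictMono p ∧ (∀ i, (p i).Prime) ∧
            n = ∏ i, p i ∧ ∀ i, jacobiSym D (p i) = ε i)).card : ℝ))
      (fun x : ℕ => (1 / 2 ^ k) * (((Finset.range (x + 1)).filter
          (fun n => Squarefree n ∧ n.primeFactors.card = k)).card : ℝ)) := by
  obtain ⟨k, rfl⟩ : ∃ k', k = k' + 1 := ⟨k - 1, by omega⟩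
  set e : ℕ → ℤ := fun i => if h : i < k + 1 then ε ⟨i, h⟩ else 1 with he
  have he1 : ∀ i, e i = 1 ∨ e i = -1 := by
    intro i
    simp only [he]
    split_ifs with h
    · exact hε _
    · left; rfl
  have hee : ∀ i : Fin (k+1), e i = ε i := by
    intro i; simp only [he, i.2, dif_pos]
  have E1 := NN_equiv (fun i => PS D (e i)) (fun i p h => h.1) (fun _ => 1/2) (fun _ => by norm_num)
    (fun i => cnt_PS D hD (e i) (he1 i)) k
  have E2 := NN_equiv (fun _ => Nat.Prime) (fun i p h => h) (fun _ => 1) (fun _ => by norm_num)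
    (fun i => cnt_prime) k
  have E3 := E1.trans ((((IsEquivalent.refl (u := fun _ : ℕ => (1 / 2 ^ (k+1) : ℝ))).mul E2).symm).congr_left
    (Eventually.of_forall fun x => by simp))
  refine (E3.congr_left (Eventually.of_forall fun x => ?_)).congr_right (Eventually.of_forall fun x => ?_)
  · simp only [NN]
    rw [NN_set _ (fun i p h => h.1)]
    congr 2
    apply Finset.filter_congr
    intro n _
    simp only [PS, hee]
    constructor
    · rintro ⟨p, h1, h2, h3⟩
      exact ⟨p, h1, fun i => (h2 i).1, h3, fun i => (h2 i).2⟩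
    · rintro ⟨p, h1, h2, h3, h4⟩
      exact ⟨p, h1, fun i => ⟨h2 i, h4 i⟩, h3⟩
  · simp only [NN, Pi.mul_apply]
    rw [NN_set _ (fun i p h => h)]
    congr 3
    ext n
    simp only [Finset.mem_filter, sqf_iff]

end WI

theorem stmt_13 (D : ℤ) (hD : ¬ IsSquare D) (k : ℕ) (hk : 1 ≤ k)
    (ε : Fin k → ℤ) (hε : ∀ i, ε i = 1 ∨ ε i = -1) :
    IsEquivalent atTop
      (fun x : ℕ => (((Finset.range (x + 1)).filter
          (fun n => ∃ p : Fin k → ℕ, StrictMono p ∧ (∀ i, (p i).Prime) ∧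
            n = ∏ i, p i ∧ ∀ i, jacobiSym D (p i) = ε i)).card : ℝ))
      (fun x : ℕ => (1 / 2 ^ k) * (((Finset.range (x + 1)).filter
          (fun n => Squarefree n ∧ n.primeFactors.card = k)).card : ℝ)) := by
  exact WI.main D hD k hk ε hε
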